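/- arXiv:2105.09500 — 4 statements merged into one kernel-verified Lean document; each statement's English description precedes it below -/
import Mathlib

section
/- Let k ≥ 2 be an integer and let G be a connected simple graph on n vertices. Suppose that for every 4-element vertex subset S such that the subgraph of G induced on S is isomorphic to one of K_{1,2} ∪ K_1, K_3 ∪ K_1, K_{1,3}, K_{1,3}+e, or P_4, and for every pair of vertices x, y ∈ S that are nonadjacent in G, one has d(x) + d(y) ≥ n − k + 1 (degrees taken in G). Then G has a spanning tree with at most k leaves. -/
open SimpleGraph

/-- `K_{1,2} ∪ K_1`: a path on the vertices 0,1,2 together with the isolated vertex 3. -/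
def pathUnionK1 : SimpleGraph (Fin 4) := SimpleGraph.fromEdgeSet {s(0, 1), s(1, 2)}

/-- `K_3 ∪ K_1`: a triangle on the vertices 0,1,2 together with the isolated vertex 3. -/
def triangleUnionK1 : SimpleGraph (Fin 4) :=
  SimpleGraph.fromEdgeSet {s(0, 1), s(1, 2), s(0, 2)}

/-- `K_{1,3}`: the star with center 0 and leaves 1,2,3. -/
def star13 : SimpleGraph (Fin 4) := SimpleGraph.fromEdgeSet {s(0, 1), s(0, 2), s(0, 3)}

/-- `K_{1,3} + e` (the paw): the star `K_{1,3}` with an added edge between leaves 1 and 2. -/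
def star13PlusE : SimpleGraph (Fin 4) :=
  SimpleGraph.fromEdgeSet {s(0, 1), s(0, 2), s(0, 3), s(1, 2)}

/-- `P_4`: the path 0-1-2-3. -/
def path4 : SimpleGraph (Fin 4) := SimpleGraph.fromEdgeSet {s(0, 1), s(1, 2), s(2, 3)}

/-- `v` is a leaf of `T`. -/
def BTLeaf {V : Type*} (T : SimpleGraph V) (v : V) : Prop := ∃ a, ∀ b, T.Adj v b ↔ b = a

/-- Remove the edge `ab`, add the edge `cd`. -/
def btSwap {V : Type*} (T : SimpleGraph V) (a b c d : V) : SimpleGraph V where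
  Adj u v := (T.Adj u v ∧ s(u, v) ≠ s(a, b)) ∨ (u ≠ v ∧ s(u, v) = s(c, d))
  symm := ⟨by
    intro u v h
    rcases h with ⟨h, h'⟩ | ⟨h, h'⟩
    · exact Or.inl ⟨h.symm, by rwa [Sym2.eq_swap]⟩
    · exact Or.inr ⟨h.symm, by rwa [Sym2.eq_swap]⟩⟩
  loopless := ⟨by
    intro u h
    rcases h with ⟨h, h'⟩ | ⟨h, h'⟩
    · exact h.ne rfl
    · exact h rfl⟩

lemma btSwap_adj {V : Type*} (T : SimpleGraph V) (a b c d u v : V) :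
    (btSwap T a b c d).Adj u v ↔
      (T.Adj u v ∧ s(u, v) ≠ s(a, b)) ∨ (u ≠ v ∧ s(u, v) = s(c, d)) := Iff.rfl

lemma bt_closed {V : Type*} {T : SimpleGraph V} (hT : T.Connected) (S : Set V) {x : V}
    (hx : x ∈ S) (h : ∀ u v, u ∈ S → T.Adj u v → v ∈ S) (z : V) : z ∈ S := by
  by_contra hz
  obtain ⟨p⟩ := hT.preconnected x z
  obtain ⟨d, -, h1, h2⟩ := p.exists_boundary_dart S hx hz
  exact h2 (h _ _ h1 d.adj)

lemma btSwap_isTree {V : Type*} [Fintype V] {T : SimpleGraph V} (hT : T.IsTree) {a b c d : V}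
    (hab : T.Adj a b) (hcd : ¬ T.Adj c d) (hne : c ≠ d)
    (h1 : (T.deleteEdges {s(a, b)}).Reachable c a)
    (h2 : (T.deleteEdges {s(a, b)}).Reachable d b) : (btSwap T a b c d).IsTree := by
  classical
  have hle : T.deleteEdges {s(a, b)} ≤ btSwap T a b c d := by
    intro u v h
    rw [deleteEdges_adj] at h
    exact Or.inl ⟨h.1, by simpa using h.2⟩
  have h1' := h1.mono hle
  have h2' := h2.mono hle
  have hcd' : (btSwap T a b c d).Adj c d := Or.inr ⟨hne, rfl⟩
  have hab' : (btSwap T a b c d).Reachable a b := h1'.symm.trans (hcd'.reachable.trans h2')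
  rw [isTree_iff_connected_and_card] at hT ⊢
  have hne' : Nonempty V := hT.1.nonempty
  refine ⟨Connected.mk ?_, ?_⟩
  · intro u v
    have := bt_closed hT.1 {v | (btSwap T a b c d).Reachable u v} (x := u) (Reachable.refl _) ?_ v
    · exact this
    intro p q hp hpq
    by_cases he : s(p, q) = s(a, b)
    · rcases Sym2.eq_iff.1 he with ⟨rfl, rfl⟩ | ⟨rfl, rfl⟩
      · exact Reachable.trans hp hab'
      · exact Reachable.trans hp hab'.symm
    · exact Reachable.trans hp (Adj.reachable (Or.inl ⟨hpq, he⟩))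
  · have hE : (btSwap T a b c d).edgeSet = insert s(c, d) (T.edgeSet \ {s(a, b)}) := by
      ext e
      induction e using Sym2.ind with
      | _ u v =>
        rw [mem_edgeSet, btSwap_adj]
        simp only [Set.mem_insert_iff, Set.mem_sdiff, mem_edgeSet, Set.mem_singleton_iff]
        constructor
        · rintro (h | h)
          · exact Or.inr h
          · exact Or.inl h.2
        · rintro (h | h)
          · refine Or.inr ⟨?_, h⟩
            rintro rfl
            rcases Sym2.eq_iff.1 h with ⟨rfl, rfl⟩ | ⟨rfl, rfl⟩ <;> exact hne rfl
          · exact Or.inl h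
    rw [← hT.2, Nat.card_coe_set_eq, Nat.card_coe_set_eq, hE, Set.ncard_exchange]
    · simpa using hcd
    · simpa using hab

lemma bt_path {V : Type*} {T : SimpleGraph V} {x y : V} (p : T.Walk x y)
    (hp : p.IsPath) {b : V} (hb : b ∈ p.support) (hbx : b ≠ x) (hby : b ≠ y) :
    ∃ a c, T.Adj a b ∧ T.Adj b c ∧ a ≠ c ∧ a ∈ p.support ∧ c ∈ p.support ∧
      (T.deleteEdges {s(a, b)}).Reachable x a ∧ (T.deleteEdges {s(a, b)}).Reachable y b := by
  classical
  set q := p.takeUntil b hb with hq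
  set r := p.dropUntil b hb with hr
  have hqr : q.append r = p := p.take_spec hb
  have hqn : ¬ q.Nil := Walk.not_nil_of_ne hbx.symm
  have hrn : ¬ r.Nil := Walk.not_nil_of_ne hby
  have hnd := hp.isTrail.edges_nodup
  rw [← hqr, Walk.edges_append, ← Walk.concat_dropLast (q.adj_penultimate hqn),
    Walk.edges_concat, List.concat_eq_append] at hnd
  have h1 : s(q.penultimate, b) ∉ q.dropLast.edges := by
    intro h
    grind
  have h2 : s(q.penultimate, b) ∉ r.edges := by
    intro h
    grind
  refine ⟨q.penultimate, r.snd, q.adj_penultimate hqn, r.adj_snd hrn, ?_, ?_, ?_, ?_, ?_⟩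
  · intro h
    apply h2
    rw [h, Sym2.eq_swap]
    rw [← r.cons_tail_eq hrn]
    simp
  · rw [← hqr, Walk.mem_support_append_iff]
    exact Or.inl (q.getVert_mem_support _)
  · rw [← hqr, Walk.mem_support_append_iff]
    exact Or.inr (r.getVert_mem_support _)
  · exact (q.dropLast.toDeleteEdge _ h1).reachable
  · exact (r.toDeleteEdge _ h2).reachable.symm

/-- Number of leaves. -/
noncomputable def btNum {V : Type*} (T : SimpleGraph V) : ℕ := {v | BTLeaf T v}.ncard

/-- In a spanning tree with fewest leaves (at least 3), leaves are independent. -/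
lemma bt_indep {V : Type*} [Fintype V] {G T : SimpleGraph V} (hTG : T ≤ G) (hT : T.IsTree)
    (hmin : ∀ T' : SimpleGraph V, T' ≤ G → T'.IsTree → btNum T ≤ btNum T')
    (h3 : 3 ≤ btNum T) {x y : V} (hx : BTLeaf T x) (hy : BTLeaf T y) : ¬ G.Adj x y := by
  classical
  intro hxy
  have hxyne := hxy.ne
  -- third leaf
  obtain ⟨z, hz, hzx, hzy⟩ : ∃ z, BTLeaf T z ∧ z ≠ x ∧ z ≠ y := by
    by_contra hcon
    push Not at hcon
    have : {v | BTLeaf T v} ⊆ {x, y} := by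
      intro v hv
      by_cases hvx : v = x
      · simp [hvx]
      · simp [hcon v hv hvx]
    have h := Set.ncard_le_ncard this
    have h' := Set.ncard_pair hxyne
    unfold btNum at h3
    omega
  obtain ⟨x', hx'⟩ := hx
  obtain ⟨y', hy'⟩ := hy
  obtain ⟨z', hz'⟩ := hz
  have hTxy : ¬ T.Adj x y := by
    intro h
    have e1 := (hx' y).1 h
    have e2 := (hy' x).1 h.symm
    have := bt_closed hT.1 {x, y} (x := x) (by simp) (by
      rintro u v (rfl | hu) huv
      · rw [hx', ← e1] at huv; simp [huv]
      · rw [Set.mem_singleton_iff] at hu; subst hu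
        rw [hy', ← e2] at huv; simp [huv]) z
    simp [hzx, hzy] at this
  obtain ⟨p, hp⟩ := (hT.1.preconnected x y).exists_isPath
  -- the leaf z is off the path
  have hzp : z ∉ p.support := by
    intro hzp
    obtain ⟨a, c, ha, hc, hac, -⟩ := bt_path p hp hzp hzx hzy
    exact hac (((hz' a).1 ha.symm).trans ((hz' c).1 hc).symm)
  obtain ⟨w⟩ := hT.1.preconnected x z
  obtain ⟨dd, -, hb, hc⟩ := w.exists_boundary_dart {v | v ∈ p.support} p.start_mem_support hzp
  have hbc := dd.adj
  generalize dd.fst = b at *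
  generalize dd.snd = c at *
  simp only [Set.mem_ofPred_eq] at hb hc
  have hpn : ¬ p.Nil := Walk.not_nil_of_ne hxyne
  have hbx : b ≠ x := by
    rintro rfl
    have e1 := (hx' c).1 hbc
    have e2 := (hx' _).1 (p.adj_snd hpn)
    exact hc (e1.trans e2.symm ▸ p.getVert_mem_support _)
  have hby : b ≠ y := by
    rintro rfl
    have e1 := (hy' c).1 hbc
    have e2 := (hy' _).1 (p.adj_penultimate hpn).symm
    exact hc (e1.trans e2.symm ▸ p.getVert_mem_support _)
  obtain ⟨a, d, hab, hbd, had, has, hds, hr1, hr2⟩ := bt_path p hp hb hbx hby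
  have hT' := btSwap_isTree hT hab hTxy hxyne hr1 hr2
  have hG' : btSwap T a b x y ≤ G := by
    rintro u v (h | h)
    · exact hTG h.1
    · rcases Sym2.eq_iff.1 h.2 with ⟨rfl, rfl⟩ | ⟨rfl, rfl⟩
      · exact hxy
      · exact hxy.symm
  have hm := hmin _ hG' hT'
  have hsub : {v | BTLeaf (btSwap T a b x y) v} ⊆ insert a ({v | BTLeaf T v} \ {x, y}) := by
    rintro v ⟨v', hv'⟩
    simp only [btSwap_adj] at hv'
    by_cases hva : v = a
    · simp [hva]
    right
    have hvb : v ≠ b := by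
      rintro rfl
      have hca : c ≠ a := fun h => hc (h ▸ has)
      have hcd : c ≠ d := fun h => hc (h ▸ hds)
      have e1 := (hv' c).1 (Or.inl ⟨hbc, by
        rw [Ne, Sym2.eq_iff]; rintro (⟨h, -⟩ | ⟨-, h⟩)
        · exact hva h
        · exact hca h⟩)
      have e2 := (hv' d).1 (Or.inl ⟨hbd, by
        rw [Ne, Sym2.eq_iff]; rintro (⟨h, -⟩ | ⟨-, h⟩)
        · exact hva h
        · exact had h.symm⟩)
      exact hcd (e1.trans e2.symm)
    have hk : ∀ u, s(v, u) ≠ s(a, b) := by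
      intro u h
      rcases Sym2.eq_iff.1 h with ⟨h, -⟩ | ⟨h, -⟩
      · exact hva h
      · exact hvb h
    have hvx : v ≠ x := by
      rintro rfl
      have e1 := (hv' y).1 (Or.inr ⟨hxyne, rfl⟩)
      have hadj : T.Adj v x' := (hx' x').2 rfl
      have e2 := (hv' x').1 (Or.inl ⟨hadj, hk _⟩)
      rw [e1, ← e2] at hTxy
      exact hTxy hadj
    have hvy : v ≠ y := by
      rintro rfl
      have e1 := (hv' x).1 (Or.inr ⟨hxyne.symm, Sym2.eq_swap⟩)
      have hadj : T.Adj v y' := (hy' y').2 rfl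
      have e2 := (hv' y').1 (Or.inl ⟨hadj, hk _⟩)
      rw [e1, ← e2] at hTxy
      exact hTxy hadj.symm
    refine ⟨⟨v', fun u => ?_⟩, by simp [hvx, hvy]⟩
    rw [← hv']
    constructor
    · intro h; exact Or.inl ⟨h, hk _⟩
    · rintro (h | h)
      · exact h.1
      · rcases Sym2.eq_iff.1 h.2 with ⟨h, -⟩ | ⟨h, -⟩
        · exact absurd h hvx
        · exact absurd h hvy
  have hc1 := Set.ncard_le_ncard hsub
  have hc2 := Set.ncard_insert_le a ({v | BTLeaf T v} \ {x, y})
  have hxyL : ({x, y} : Set V) ⊆ {v | BTLeaf T v} := by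
    rintro v (rfl | hv)
    · exact ⟨x', hx'⟩
    · rw [Set.mem_singleton_iff] at hv; subst hv; exact ⟨y', hy'⟩
  have hc3 := Set.ncard_sdiff_add_ncard_of_subset hxyL
  have hc4 := Set.ncard_pair hxyne
  unfold btNum at hm h3
  omega

lemma bt_main {V : Type*} [Fintype V] [DecidableEq V] {G T : SimpleGraph V} [DecidableRel G.Adj]
    (hTG : T ≤ G) (hT : T.IsTree)
    (hmin : ∀ T' : SimpleGraph V, T' ≤ G → T'.IsTree → btNum T ≤ btNum T')
    (h3 : 3 ≤ btNum T) {x y : V} (hx : BTLeaf T x) (hy : BTLeaf T y) (hxyne : x ≠ y) :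
    G.degree x + G.degree y + btNum T ≤ Fintype.card V + 1 := by
  classical
  have hxy := bt_indep hTG hT hmin h3 hx hy
  have hpar : ∀ w, ∃ u, w ≠ x → T.Adj u w ∧ T.dist x w = T.dist x u + 1 := by
    intro w
    by_cases hw : w = x
    · exact ⟨x, fun h => absurd hw h⟩
    obtain ⟨p, hp⟩ := hT.1.exists_walk_length_eq_dist x w
    have hn : ¬ p.Nil := Walk.not_nil_of_ne (Ne.symm hw)
    refine ⟨p.penultimate, fun _ => ⟨p.adj_penultimate hn, ?_⟩⟩
    have h1 := dist_le p.dropLast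
    have h2 := Walk.length_dropLast_add_one hn
    have h3 := hT.1.dist_triangle (u := x) (v := p.penultimate) (w := w)
    rw [dist_eq_one_iff_adj.2 (p.adj_penultimate hn)] at h3
    omega
  choose par hpar using hpar
  have hreach : ∀ (a w : V) (n : ℕ) (v : V), T.dist x v = n → n < T.dist x w →
      (T.deleteEdges {s(a, w)}).Reachable x v := by
    intro a w n
    induction n with
    | zero =>
      intro v hv _
      have : x = v := hT.1.dist_eq_zero_iff.1 hv
      rw [this]
    | succ n ih =>
      intro v hv hn
      have hvx : v ≠ x := by rintro rfl; simp at hv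
      obtain ⟨h1, h2⟩ := hpar v hvx
      refine (ih (par v) (by omega) (by omega)).trans (Adj.reachable ?_)
      rw [deleteEdges_adj]
      refine ⟨h1, ?_⟩
      rw [Set.mem_singleton_iff, Sym2.eq_iff]
      rintro (⟨-, rfl⟩ | ⟨rfl, -⟩) <;> omega
  have key : ∀ w, G.Adj x w → par w = x ∨
      (¬ BTLeaf T (par w) ∧ ¬ G.Adj y (par w) ∧ ∃ q, ∀ v, T.Adj (par w) v → v = w ∨ v = q) := by
    intro w hxw
    have hwx : w ≠ x := hxw.ne'
    obtain ⟨h1, h2⟩ := hpar w hwx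
    by_cases hTw : T.Adj x w
    · left
      rw [dist_eq_one_iff_adj.2 hTw] at h2
      exact (hT.1.dist_eq_zero_iff.1 (by omega)).symm
    right
    generalize par w = u at *
    have hux : u ≠ x := by rintro rfl; exact hTw h1
    have hT' := btSwap_isTree hT h1 hTw hwx.symm (hreach u w _ u rfl (by omega)) (Reachable.refl w)
    have hG' : btSwap T u w x w ≤ G := by
      rintro u v (h | h)
      · exact hTG h.1
      · rcases Sym2.eq_iff.1 h.2 with ⟨rfl, rfl⟩ | ⟨rfl, rfl⟩
        · exact hxw
        · exact hxw.symm
    have hm := hmin _ hG' hT'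
    have hsub : {v | BTLeaf (btSwap T u w x w) v} ⊆ insert u ({v | BTLeaf T v} \ {x}) := by
      rintro v ⟨v', hv'⟩
      simp only [btSwap_adj] at hv'
      by_cases hvu : v = u
      · simp [hvu]
      right
      by_cases hvw : v = w
      · subst hvw
        have e1 := (hv' x).1 (Or.inr ⟨hwx, Sym2.eq_swap⟩)
        refine ⟨⟨u, fun t => ⟨fun ht => ?_, fun ht => ht ▸ h1.symm⟩⟩, by simpa using hwx⟩
        by_contra htu
        have e2 := (hv' t).1 (Or.inl ⟨ht, by
          rw [Ne, Sym2.eq_iff]; rintro (⟨h, -⟩ | ⟨-, h⟩)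
          · exact hvu h
          · exact htu h⟩)
        rw [e2, ← e1] at ht
        exact hTw ht.symm
      have hk : ∀ t, s(v, t) ≠ s(u, w) := by
        intro t h
        rcases Sym2.eq_iff.1 h with ⟨h, -⟩ | ⟨h, -⟩
        · exact hvu h
        · exact hvw h
      have hvx : v ≠ x := by
        rintro rfl
        obtain ⟨x', hx'⟩ := hx
        have e1 := (hv' w).1 (Or.inr ⟨hwx.symm, rfl⟩)
        have hadj : T.Adj v x' := (hx' x').2 rfl
        have e2 := (hv' x').1 (Or.inl ⟨hadj, hk _⟩)
        rw [e1, ← e2] at hTw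
        exact hTw hadj
      refine ⟨⟨v', fun t => ?_⟩, by simpa using hvx⟩
      rw [← hv']
      constructor
      · intro h; exact Or.inl ⟨h, hk _⟩
      · rintro (h | h)
        · exact h.1
        · rcases Sym2.eq_iff.1 h.2 with ⟨h, -⟩ | ⟨h, -⟩
          · exact absurd h hvx
          · exact absurd h hvw
    have hdx := Set.ncard_sdiff_singleton_add_one (s := {v | BTLeaf T v}) (a := x) hx
    have hins := Set.ncard_insert_le u ({v | BTLeaf T v} \ {x})
    unfold btNum at hm
    have heq := Set.eq_of_subset_of_ncard_le hsub (by omega)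
    have huT : ¬ BTLeaf T u := by
      intro hu
      rw [Set.insert_eq_of_mem (show u ∈ {v | BTLeaf T v} \ {x} from ⟨hu, hux⟩)] at heq
      rw [heq] at hm
      omega
    have hu' : BTLeaf (btSwap T u w x w) u := by
      have : u ∈ {v | BTLeaf (btSwap T u w x w) v} := by rw [heq]; simp
      exact this
    have hy' : BTLeaf (btSwap T u w x w) y := by
      have : y ∈ {v | BTLeaf (btSwap T u w x w) v} := by
        rw [heq]; exact Or.inr ⟨hy, hxyne.symm⟩
      exact this
    have hnum : btNum (btSwap T u w x w) ≤ btNum T := by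
      unfold btNum
      rw [heq]; omega
    refine ⟨huT, ?_, ?_⟩
    · refine bt_indep hG' hT' (fun T'' h h' => hnum.trans (hmin T'' h h')) ?_ hy' hu'
      exact h3.trans hm
    · obtain ⟨q, hq⟩ := hu'
      refine ⟨q, fun v hv => ?_⟩
      by_cases hvw : v = w
      · exact Or.inl hvw
      right
      refine (hq v).1 (Or.inl ⟨hv, ?_⟩)
      rw [Ne, Sym2.eq_iff]; rintro (⟨-, h⟩ | ⟨h, -⟩)
      · exact hvw h
      · exact h1.ne h
  have hinj : Set.InjOn par (G.neighborFinset x) := by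
    intro w1 hw1 w2 hw2 he
    rw [Finset.mem_coe, mem_neighborFinset] at hw1 hw2
    by_contra hne
    obtain ⟨a1, d1⟩ := hpar w1 hw1.ne'
    obtain ⟨a2, d2⟩ := hpar w2 hw2.ne'
    rcases key w1 hw1 with hk | ⟨-, -, q, hq⟩
    · obtain ⟨x', hx'⟩ := hx
      rw [hk] at a1
      rw [← he, hk] at a2
      exact hne (((hx' _).1 a1).trans ((hx' _).1 a2).symm)
    · have hpx : par w1 ≠ x := by
        intro hk
        obtain ⟨x', hx'⟩ := hx
        rw [hk] at a1
        rw [← he, hk] at a2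
        exact hne (((hx' _).1 a1).trans ((hx' _).1 a2).symm)
      obtain ⟨a3, d3⟩ := hpar (par w1) hpx
      rw [← he] at a2 d2
      have n1 : par (par w1) ≠ w1 := by intro h; rw [h] at d3; omega
      have n2 : par (par w1) ≠ w2 := by intro h; rw [h] at d3; omega
      have e2 := (hq w2 a2).resolve_left (Ne.symm hne)
      have e3 := (hq _ a3.symm).resolve_left n1
      exact n2 (e3.trans e2.symm)
  -- counting
  set A := (G.neighborFinset x).image par with hA
  set B := G.neighborFinset y with hB
  set L := ({v | BTLeaf T v} : Set V).toFinset with hL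
  have hAc : A.card = G.degree x := by
    rw [hA, Finset.card_image_of_injOn hinj, card_neighborFinset_eq_degree]
  have hBc : B.card = G.degree y := card_neighborFinset_eq_degree G y
  have hLc : L.card = btNum T := (Set.ncard_eq_toFinset_card' _).symm
  have hxL : x ∈ L := by simpa [hL] using hx
  have hLe := Finset.card_erase_add_one hxL
  have hAB : Disjoint A B := by
    rw [Finset.disjoint_left]
    intro v hv hvB
    rw [hB, mem_neighborFinset] at hvB
    rw [hA, Finset.mem_image] at hv
    obtain ⟨w, hw, rfl⟩ := hv
    rw [mem_neighborFinset] at hw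
    rcases key w hw with h | ⟨-, h, -⟩
    · rw [h] at hvB; exact hxy hvB.symm
    · exact h hvB
  have hABL : Disjoint (A ∪ B) (L.erase x) := by
    rw [Finset.disjoint_left]
    intro v hv hvL
    rw [Finset.mem_erase] at hvL
    have hvl : BTLeaf T v := by simpa [hL] using hvL.2
    rw [Finset.mem_union] at hv
    rcases hv with hv | hv
    · rw [hA, Finset.mem_image] at hv
      obtain ⟨w, hw, rfl⟩ := hv
      rw [mem_neighborFinset] at hw
      rcases key w hw with h | ⟨h, -, -⟩
      · exact hvL.1 h
      · exact h hvl
    · rw [hB, mem_neighborFinset] at hv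
      exact bt_indep hTG hT hmin h3 hy hvl hv
  have h1 := Finset.card_union_of_disjoint hAB
  have h2 := Finset.card_union_of_disjoint hABL
  have h4 := Finset.card_le_univ ((A ∪ B) ∪ L.erase x)
  omega

lemma bt_iso {V : Type*} [DecidableEq V] (G : SimpleGraph V) (H : SimpleGraph (Fin 4))
    {a b c d : V} (hab : a ≠ b) (hac : a ≠ c) (had : a ≠ d) (hbc : b ≠ c) (hbd : b ≠ d)
    (hcd : c ≠ d) (h01 : G.Adj a b ↔ H.Adj 0 1) (h02 : G.Adj a c ↔ H.Adj 0 2)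
    (h03 : G.Adj a d ↔ H.Adj 0 3) (h12 : G.Adj b c ↔ H.Adj 1 2) (h13 : G.Adj b d ↔ H.Adj 1 3)
    (h23 : G.Adj c d ↔ H.Adj 2 3) :
    Nonempty (G.induce (({a, b, c, d} : Finset V) : Set V) ≃g H) := by
  have hinj : Function.Injective ![a, b, c, d] := by
    intro i j h
    fin_cases i <;> fin_cases j <;> simp_all
  have hmem : ∀ i, ![a, b, c, d] i ∈ (({a, b, c, d} : Finset V) : Set V) := by
    intro i
    fin_cases i <;> simp
  let f : Fin 4 → (({a, b, c, d} : Finset V) : Set V) := fun i => ⟨![a, b, c, d] i, hmem i⟩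
  have hf : Function.Bijective f := by
    constructor
    · intro i j h
      exact hinj (congrArg Subtype.val h)
    · rintro ⟨v, hv⟩
      simp only [Finset.coe_insert, Finset.coe_singleton, Set.mem_insert_iff,
        Set.mem_singleton_iff] at hv
      rcases hv with rfl | rfl | rfl | rfl
      · exact ⟨0, rfl⟩
      · exact ⟨1, rfl⟩
      · exact ⟨2, rfl⟩
      · exact ⟨3, rfl⟩
  refine ⟨(RelIso.symm ⟨Equiv.ofBijective f hf, ?_⟩)⟩
  intro i j
  simp only [Equiv.ofBijective_apply, comap_adj, Function.Embedding.subtype_apply, f]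
  fin_cases i <;> fin_cases j <;> simp [h01, h02, h03, h12, h13, h23, G.adj_comm b a,
    G.adj_comm c a, G.adj_comm d a, G.adj_comm c b, G.adj_comm d b, G.adj_comm d c,
    H.adj_comm 1 0, H.adj_comm 2 0, H.adj_comm 3 0, H.adj_comm 2 1, H.adj_comm 3 1, H.adj_comm 3 2]

set_option maxHeartbeats 4000000 in
lemma bt_degree {V : Type*} [Fintype V] [DecidableEq V]
    (G : SimpleGraph V) [DecidableRel G.Adj]
    (k : ℕ) (hk : 2 ≤ k) (hconn : G.Connected)
    (hcond : ∀ S : Finset V, S.card = 4 →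
      (Nonempty (G.induce (S : Set V) ≃g pathUnionK1) ∨
       Nonempty (G.induce (S : Set V) ≃g triangleUnionK1) ∨
       Nonempty (G.induce (S : Set V) ≃g star13) ∨
       Nonempty (G.induce (S : Set V) ≃g star13PlusE) ∨
       Nonempty (G.induce (S : Set V) ≃g path4)) →
      ∀ x ∈ S, ∀ y ∈ S, x ≠ y → ¬ G.Adj x y →
        (Fintype.card V : ℤ) - k + 1 ≤ G.degree x + G.degree y)
    {x y : V} (hne : x ≠ y) (hxy : ¬ G.Adj x y) :
    (Fintype.card V : ℤ) - k + 1 ≤ G.degree x + G.degree y := by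
  by_contra hbad
  have gen : ∀ a b c d : V, a ≠ b → a ≠ c → a ≠ d → b ≠ c → b ≠ d → c ≠ d →
      x ∈ ({a, b, c, d} : Finset V) → y ∈ ({a, b, c, d} : Finset V) →
      ¬ (Nonempty (G.induce (({a, b, c, d} : Finset V) : Set V) ≃g pathUnionK1) ∨
       Nonempty (G.induce (({a, b, c, d} : Finset V) : Set V) ≃g triangleUnionK1) ∨
       Nonempty (G.induce (({a, b, c, d} : Finset V) : Set V) ≃g star13) ∨
       Nonempty (G.induce (({a, b, c, d} : Finset V) : Set V) ≃g star13PlusE) ∨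
       Nonempty (G.induce (({a, b, c, d} : Finset V) : Set V) ≃g path4)) := by
    intro a b c d h1 h2 h3 h4 h5 h6 hx hy hiso
    refine hbad (hcond {a, b, c, d} ?_ hiso x hx y hy hne hxy)
    simp [h1, h2, h3, h4, h5, h6]
  have p0 : ∀ a b c d : V, a ≠ b → a ≠ c → a ≠ d → b ≠ c → b ≠ d → c ≠ d →
      (x = a ∨ x = b ∨ x = c ∨ x = d) → (y = a ∨ y = b ∨ y = c ∨ y = d) →
      G.Adj a b → ¬ G.Adj a c → ¬ G.Adj a d → G.Adj b c → ¬ G.Adj b d → ¬ G.Adj c d → False := by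
    intro a b c d h1 h2 h3 h4 h5 h6 hx hy e1 e2 e3 e4 e5 e6
    have h : Nonempty (G.induce (({a, b, c, d} : Finset V) : Set V) ≃g pathUnionK1) := by
      refine bt_iso G _ h1 h2 h3 h4 h5 h6 ?_ ?_ ?_ ?_ ?_ ?_
      · simp only [e1]; simp [pathUnionK1]
      · simp only [e2]; simp [pathUnionK1]
      · simp only [e3]; simp [pathUnionK1]
      · simp only [e4]; simp [pathUnionK1]
      · simp only [e5]; simp [pathUnionK1]
      · simp only [e6]; simp [pathUnionK1]
    exact gen a b c d h1 h2 h3 h4 h5 h6 (by simpa using hx) (by simpa using hy) (Or.inl h)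
  have p1 : ∀ a b c d : V, a ≠ b → a ≠ c → a ≠ d → b ≠ c → b ≠ d → c ≠ d →
      (x = a ∨ x = b ∨ x = c ∨ x = d) → (y = a ∨ y = b ∨ y = c ∨ y = d) →
      G.Adj a b → G.Adj a c → ¬ G.Adj a d → G.Adj b c → ¬ G.Adj b d → ¬ G.Adj c d → False := by
    intro a b c d h1 h2 h3 h4 h5 h6 hx hy e1 e2 e3 e4 e5 e6
    have h : Nonempty (G.induce (({a, b, c, d} : Finset V) : Set V) ≃g triangleUnionK1) := by
      refine bt_iso G _ h1 h2 h3 h4 h5 h6 ?_ ?_ ?_ ?_ ?_ ?_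
      · simp only [e1]; simp [triangleUnionK1]
      · simp only [e2]; simp [triangleUnionK1]
      · simp only [e3]; simp [triangleUnionK1]
      · simp only [e4]; simp [triangleUnionK1]
      · simp only [e5]; simp [triangleUnionK1]
      · simp only [e6]; simp [triangleUnionK1]
    exact gen a b c d h1 h2 h3 h4 h5 h6 (by simpa using hx) (by simpa using hy) (Or.inr (Or.inl h))
  have p2 : ∀ a b c d : V, a ≠ b → a ≠ c → a ≠ d → b ≠ c → b ≠ d → c ≠ d →
      (x = a ∨ x = b ∨ x = c ∨ x = d) → (y = a ∨ y = b ∨ y = c ∨ y = d) →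
      G.Adj a b → G.Adj a c → G.Adj a d → ¬ G.Adj b c → ¬ G.Adj b d → ¬ G.Adj c d → False := by
    intro a b c d h1 h2 h3 h4 h5 h6 hx hy e1 e2 e3 e4 e5 e6
    have h : Nonempty (G.induce (({a, b, c, d} : Finset V) : Set V) ≃g star13) := by
      refine bt_iso G _ h1 h2 h3 h4 h5 h6 ?_ ?_ ?_ ?_ ?_ ?_
      · simp only [e1]; simp [star13]
      · simp only [e2]; simp [star13]
      · simp only [e3]; simp [star13]
      · simp only [e4]; simp [star13]
      · simp only [e5]; simp [star13]
      · simp only [e6]; simp [star13]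
    exact gen a b c d h1 h2 h3 h4 h5 h6 (by simpa using hx) (by simpa using hy) (Or.inr (Or.inr (Or.inl h)))
  have p3 : ∀ a b c d : V, a ≠ b → a ≠ c → a ≠ d → b ≠ c → b ≠ d → c ≠ d →
      (x = a ∨ x = b ∨ x = c ∨ x = d) → (y = a ∨ y = b ∨ y = c ∨ y = d) →
      G.Adj a b → G.Adj a c → G.Adj a d → G.Adj b c → ¬ G.Adj b d → ¬ G.Adj c d → False := by
    intro a b c d h1 h2 h3 h4 h5 h6 hx hy e1 e2 e3 e4 e5 e6
    have h : Nonempty (G.induce (({a, b, c, d} : Finset V) : Set V) ≃g star13PlusE) := by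
      refine bt_iso G _ h1 h2 h3 h4 h5 h6 ?_ ?_ ?_ ?_ ?_ ?_
      · simp only [e1]; simp [star13PlusE]
      · simp only [e2]; simp [star13PlusE]
      · simp only [e3]; simp [star13PlusE]
      · simp only [e4]; simp [star13PlusE]
      · simp only [e5]; simp [star13PlusE]
      · simp only [e6]; simp [star13PlusE]
    exact gen a b c d h1 h2 h3 h4 h5 h6 (by simpa using hx) (by simpa using hy) (Or.inr (Or.inr (Or.inr (Or.inl h))))
  have p4 : ∀ a b c d : V, a ≠ b → a ≠ c → a ≠ d → b ≠ c → b ≠ d → c ≠ d →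
      (x = a ∨ x = b ∨ x = c ∨ x = d) → (y = a ∨ y = b ∨ y = c ∨ y = d) →
      G.Adj a b → ¬ G.Adj a c → ¬ G.Adj a d → G.Adj b c → ¬ G.Adj b d → G.Adj c d → False := by
    intro a b c d h1 h2 h3 h4 h5 h6 hx hy e1 e2 e3 e4 e5 e6
    have h : Nonempty (G.induce (({a, b, c, d} : Finset V) : Set V) ≃g path4) := by
      refine bt_iso G _ h1 h2 h3 h4 h5 h6 ?_ ?_ ?_ ?_ ?_ ?_
      · simp only [e1]; simp [path4]
      · simp only [e2]; simp [path4]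
      · simp only [e3]; simp [path4]
      · simp only [e4]; simp [path4]
      · simp only [e5]; simp [path4]
      · simp only [e6]; simp [path4]
    exact gen a b c d h1 h2 h3 h4 h5 h6 (by simpa using hx) (by simpa using hy) (Or.inr (Or.inr (Or.inr (Or.inr (h)))))
  clear gen
  have hyx : ¬ G.Adj y x := fun h => hxy h.symm
  have hs : ∀ a b, G.Adj a b → G.Adj b a := fun a b h => h.symm
  have hirr : ∀ a b, G.Adj a b → a ≠ b := fun a b h => h.ne
  -- a common neighbour together with any vertex which is not a common neighbour
  have hA1 : ∀ u v, G.Adj x u → G.Adj y u → v ≠ x → v ≠ y → v ≠ u → G.Adj x v → ¬ G.Adj y v →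
      False := by
    intro u v hxu hyu hvx hvy hvu hxv hyv
    by_cases huv : G.Adj u v
    · exact p3 u x v y (by grind) (by grind) (by grind) (by grind) (by grind) (by grind) (by grind)
        (by grind) (by grind) (by grind) (by grind) (by grind) (by grind) (by grind)
    · exact p4 v x u y (by grind) (by grind) (by grind) (by grind) (by grind) (by grind) (by grind)
        (by grind) (by grind) (by grind) (by grind) (by grind) (by grind) (by grind)
  have hA2 : ∀ u v, G.Adj x u → G.Adj y u → v ≠ x → v ≠ y → v ≠ u → ¬ G.Adj x v → G.Adj y v →
      False := by
    intro u v hxu hyu hvx hvy hvu hxv hyv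
    by_cases huv : G.Adj u v
    · exact p3 u y v x (by grind) (by grind) (by grind) (by grind) (by grind) (by grind) (by grind)
        (by grind) (by grind) (by grind) (by grind) (by grind) (by grind) (by grind)
    · exact p4 v y u x (by grind) (by grind) (by grind) (by grind) (by grind) (by grind) (by grind)
        (by grind) (by grind) (by grind) (by grind) (by grind) (by grind) (by grind)
  have hA3 : ∀ u v, G.Adj x u → G.Adj y u → v ≠ x → v ≠ y → v ≠ u → ¬ G.Adj x v → ¬ G.Adj y v →
      False := by
    intro u v hxu hyu hvx hvy hvu hxv hyv
    by_cases huv : G.Adj u v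
    · exact p2 u x y v (by grind) (by grind) (by grind) (by grind) (by grind) (by grind) (by grind)
        (by grind) (by grind) (by grind) (by grind) (by grind) (by grind) (by grind)
    · exact p0 x u y v (by grind) (by grind) (by grind) (by grind) (by grind) (by grind) (by grind)
        (by grind) (by grind) (by grind) (by grind) (by grind) (by grind) (by grind)
  have hBB : ∀ u v, G.Adj x u → ¬ G.Adj y u → u ≠ v → G.Adj x v → ¬ G.Adj y v → False := by
    intro u v hxu hyu huv hxv hyv
    by_cases huv : G.Adj u v
    · exact p1 x u v y (by grind) (by grind) (by grind) (by grind) (by grind) (by grind) (by grind)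
        (by grind) (by grind) (by grind) (by grind) (by grind) (by grind) (by grind)
    · exact p0 u x v y (by grind) (by grind) (by grind) (by grind) (by grind) (by grind) (by grind)
        (by grind) (by grind) (by grind) (by grind) (by grind) (by grind) (by grind)
  have hBD : ∀ u v, G.Adj x u → ¬ G.Adj y u → v ≠ x → v ≠ y → G.Adj u v → ¬ G.Adj x v → False := by
    intro u v hxu hyu hvx hvy huv hxv
    by_cases hyv : G.Adj y v
    · exact p4 x u v y (by grind) (by grind) (by grind) (by grind) (by grind) (by grind) (by grind)
        (by grind) (by grind) (by grind) (by grind) (by grind) (by grind) (by grind)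
    · exact p0 x u v y (by grind) (by grind) (by grind) (by grind) (by grind) (by grind) (by grind)
        (by grind) (by grind) (by grind) (by grind) (by grind) (by grind) (by grind)
  clear p0 p1 p2 p3 p4
  obtain ⟨u, hxu⟩ : ∃ u, G.Adj x u := by
    by_contra hcon
    push Not at hcon
    have := bt_closed hconn {x} (x := x) rfl (by
      rintro a b rfl hab
      exact absurd hab (hcon b)) y
    exact hne.symm this
  by_cases hyu : G.Adj y u
  · have hall : ∀ v, v ≠ x → v ≠ y → G.Adj x v ∧ G.Adj y v := by
      intro v hvx hvy
      by_cases hvu : v = u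
      · subst hvu; exact ⟨hxu, hyu⟩
      by_cases h1 : G.Adj x v <;> by_cases h2 : G.Adj y v
      · exact ⟨h1, h2⟩
      · exact (hA1 u v hxu hyu hvx hvy hvu h1 h2).elim
      · exact (hA2 u v hxu hyu hvx hvy hvu h1 h2).elim
      · exact (hA3 u v hxu hyu hvx hvy hvu h1 h2).elim
    have hc2 : ({x, y} : Finset V).card = 2 := Finset.card_pair hne
    have hcc := Finset.card_compl_add_card ({x, y} : Finset V)
    have hdx : (({x, y} : Finset V)ᶜ).card ≤ G.degree x := by
      rw [← card_neighborFinset_eq_degree]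
      apply Finset.card_le_card
      intro v hv
      simp only [Finset.mem_compl, Finset.mem_insert, Finset.mem_singleton, not_or] at hv
      exact (mem_neighborFinset _ _ _).2 (hall v hv.1 hv.2).1
    have hdy : (({x, y} : Finset V)ᶜ).card ≤ G.degree y := by
      rw [← card_neighborFinset_eq_degree]
      apply Finset.card_le_card
      intro v hv
      simp only [Finset.mem_compl, Finset.mem_insert, Finset.mem_singleton, not_or] at hv
      exact (mem_neighborFinset _ _ _).2 (hall v hv.1 hv.2).2
    have hpos : 0 < (({x, y} : Finset V)ᶜ).card := by
      apply Finset.card_pos.2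
      exact ⟨u, by simp [hxu.ne', hyu.ne']⟩
    omega
  · have := bt_closed hconn {x, u} (x := x) (by simp) (by
      intro a v ha hav
      by_contra hv
      simp only [Set.mem_insert_iff, Set.mem_singleton_iff, not_or] at ha hv
      have hvy : v ≠ y := by
        rintro rfl
        rcases ha with rfl | rfl
        · exact hxy hav
        · exact hyu hav.symm
      have hxv : ¬ G.Adj x v := by
        intro hxv
        by_cases hyv : G.Adj y v
        · exact hA1 v u hxv hyv hxu.ne' (by rintro rfl; exact hxy hxu) (Ne.symm hv.2) hxu hyu
        · exact hBB u v hxu hyu (Ne.symm hv.2) hxv hyv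
      rcases ha with rfl | rfl
      · exact hxv hav
      · exact hBD a v hxu hyu hv.1 hvy hav hxv) y
    simp only [Set.mem_insert_iff, Set.mem_singleton_iff] at this
    rcases this with h | rfl
    · exact hne h.symm
    · exact hxy hxu

/-- **Theorem 2.** For a given integer `k ≥ 2`, every connected graph on `n` vertices
satisfying `d(x) + d(y) ≥ n - k + 1` for each pair of nonadjacent vertices `x, y` of every
4-element induced subgraph isomorphic to `K_{1,2} ∪ K_1`, `K_3 ∪ K_1`, `K_{1,3}`,
`K_{1,3} + e` or `P_4`, has a spanning tree with at most `k` leaves. -/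
theorem stmt1 {V : Type*} [Fintype V] [DecidableEq V]
    (G : SimpleGraph V) [DecidableRel G.Adj]
    (k : ℕ) (hk : 2 ≤ k) (hconn : G.Connected)
    (hcond : ∀ S : Finset V, S.card = 4 →
      (Nonempty (G.induce (S : Set V) ≃g pathUnionK1) ∨
       Nonempty (G.induce (S : Set V) ≃g triangleUnionK1) ∨
       Nonempty (G.induce (S : Set V) ≃g star13) ∨
       Nonempty (G.induce (S : Set V) ≃g star13PlusE) ∨
       Nonempty (G.induce (S : Set V) ≃g path4)) →
      ∀ x ∈ S, ∀ y ∈ S, x ≠ y → ¬ G.Adj x y →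
        (Fintype.card V : ℤ) - k + 1 ≤ G.degree x + G.degree y) :
    ∃ T : SimpleGraph V, T ≤ G ∧ T.IsTree ∧
      {v : V | (T.neighborSet v).ncard = 1}.ncard ≤ k := by
  classical
  obtain ⟨T₀, hT₀G, hT₀⟩ := hconn.exists_isTree_le
  obtain ⟨T, ⟨hTG, hT⟩, hmin⟩ := Set.exists_min_image {T : SimpleGraph V | T ≤ G ∧ T.IsTree} btNum
    (Set.toFinite _) ⟨T₀, hT₀G, hT₀⟩
  have hmin' : ∀ T' : SimpleGraph V, T' ≤ G → T'.IsTree → btNum T ≤ btNum T' :=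
    fun T' h h' => hmin T' ⟨h, h'⟩
  refine ⟨T, hTG, hT, ?_⟩
  have hset : {v : V | (T.neighborSet v).ncard = 1} = {v | BTLeaf T v} := by
    ext v
    simp only [Set.mem_ofPred_eq, Set.ncard_eq_one, BTLeaf, Set.ext_iff, mem_neighborSet,
      Set.mem_singleton_iff]
  rw [hset]
  change btNum T ≤ k
  by_contra hlt
  have h3 : 3 ≤ btNum T := by omega
  obtain ⟨x, hx, y, hy, hne⟩ := (Set.one_lt_ncard_iff_nontrivial (s := {v | BTLeaf T v})).1
    (show 1 < btNum T by omega)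
  have h1 := bt_main hTG hT hmin' h3 hx hy hne
  have h2 := bt_degree G k hk hconn hcond hne (bt_indep hTG hT hmin' h3 hx hy)
  omega
end

section
/- Let G be a simple graph on n ≥ 4 vertices. Suppose that for every 4-element vertex subset S such that the subgraph of G induced on S is isomorphic to K_{1,2} ∪ K_1, to a graph obtained from K_{1,2} ∪ K_1 by adding one edge (i.e., to one of K_3 ∪ K_1, K_{1,3}, P_4), or to K_{1,3}+e, and for every pair of vertices x, y ∈ S that are nonadjacent in G, one has d(x) + d(y) ≥ n (degrees taken in G). If G has a vertex v with d(v) ≥ 2, then G is Hamiltonian. -/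
open SimpleGraph

section Ore
variable {V : Type*} (G : SimpleGraph V) [DecidableRel G.Adj]

/-- One if the pair is not adjacent, 0 otherwise. -/
def gap (a b : V) : ℕ := if G.Adj a b then 0 else 1

/-- number of consecutive nonadjacent pairs in a list -/
def pathGaps : List V → ℕ
  | [] => 0
  | [_] => 0
  | a :: b :: l => gap G a b + pathGaps (b :: l)

/-- number of cyclically consecutive nonadjacent pairs in a list -/
def cycGaps (l : List V) (h : l ≠ []) : ℕ := pathGaps G l + gap G (l.getLast h) (l.head h)

lemma gap_comm (a b : V) : gap G a b = gap G b a := by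
  simp [gap, G.adj_comm]

lemma pathGaps_append : ∀ (A B : List V) (hA : A ≠ []) (hB : B ≠ []),
    pathGaps G (A ++ B) = pathGaps G A + gap G (A.getLast hA) (B.head hB) + pathGaps G B
  | [], _, hA, _ => absurd rfl hA
  | [a], b :: B, _, _ => by simp [pathGaps]
  | [a], [], _, hB => absurd rfl hB
  | a :: a' :: A, B, _, hB => by
    have := pathGaps_append (a' :: A) B (by simp) hB
    simp only [List.cons_append, pathGaps] at this ⊢
    rw [this]
    simp only [List.getLast_cons_cons]
    omega

lemma pathGaps_reverse : ∀ (A : List V), pathGaps G A.reverse = pathGaps G A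
  | [] => rfl
  | [a] => rfl
  | a :: b :: A => by
    have := pathGaps_reverse (b :: A)
    rw [List.reverse_cons, pathGaps_append G _ _ (by simp) (by simp), this]
    simp [pathGaps, gap_comm G a b]
    omega

lemma cycGaps_append (A B : List V) (hA : A ≠ []) (hB : B ≠ []) :
    cycGaps G (A ++ B) (by simp [hA]) = pathGaps G A + gap G (A.getLast hA) (B.head hB)
      + pathGaps G B + gap G (B.getLast hB) (A.head hA) := by
  unfold cycGaps
  rw [pathGaps_append G A B hA hB, List.getLast_append_of_ne_nil (by simp [hA]) hB,
    List.head_append_of_ne_nil hA]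

lemma exists_gap_of_pos : ∀ (l : List V), pathGaps G l ≠ 0 →
    ∃ (A B : List V) (hA : A ≠ []) (hB : B ≠ []), l = A ++ B ∧
      ¬ G.Adj (A.getLast hA) (B.head hB)
  | [], h => absurd rfl h
  | [_], h => absurd rfl h
  | a :: b :: l, h => by
    by_cases hab : G.Adj a b
    · have h' : pathGaps G (b :: l) ≠ 0 := by simpa [pathGaps, gap, hab] using h
      obtain ⟨A, B, hA, hB, e, hn⟩ := exists_gap_of_pos _ h'
      exact ⟨a :: A, B, by simp, hB, by simp [e], by rwa [List.getLast_cons hA]⟩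
    · exact ⟨[a], b :: l, by simp, by simp, rfl, by simpa using hab⟩

lemma isChain_of_pathGaps : ∀ (l : List V), pathGaps G l = 0 → l.IsChain G.Adj
  | [], _ => by simp
  | [_], _ => by simp
  | a :: b :: l, h => by
    have h1 : gap G a b = 0 := by simp only [pathGaps] at h; omega
    have h2 : pathGaps G (b :: l) = 0 := by simp only [pathGaps] at h; omega
    rw [List.isChain_cons_cons]
    exact ⟨by simpa [gap] using h1, isChain_of_pathGaps _ h2⟩

variable [Fintype V] [DecidableEq V]

lemma exists_cross (l : List V) (hne : l ≠ []) (hnd : l.Nodup) (hall : ∀ v, v ∈ l)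
    (hd : Fintype.card V ≤ G.degree (l.getLast hne) + G.degree (l.head hne)) :
    ∃ (A B : List V) (hA : A ≠ []) (hB : B ≠ []), l = A ++ B ∧
      G.Adj (A.getLast hA) (B.getLast hB) ∧ G.Adj (B.head hB) (A.head hA) := by
  have hlen : l.length = Fintype.card V := by
    rw [← List.toFinset_card_of_nodup hnd, ← Finset.card_univ]
    congr 1; ext v; simp [hall]
  have hpos : 0 < l.length := List.length_pos_iff.2 hne
  set x := l.head hne with hx
  set y := l.getLast hne with hy
  have hx0 : l[0] = x := by simp [hx, List.head_eq_getElem]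
  have hyl : l[l.length - 1] = y := by simp [hy, List.getLast_eq_getElem]
  classical
  let S : Finset ℕ := (Finset.range (l.length - 1)).filter
    fun i => ∃ h : i + 1 < l.length, G.Adj x l[i+1]
  let T : Finset ℕ := (Finset.range (l.length - 1)).filter
    fun i => ∃ h : i < l.length, G.Adj y l[i]
  have hS : G.degree x ≤ S.card := by
    rw [← G.card_neighborFinset_eq_degree]
    apply Finset.card_le_card_of_injOn (fun v => l.idxOf v - 1)
    · intro v hv
      have hv' : G.Adj x v := by simpa using hv
      have h1 : l.idxOf v < l.length := List.idxOf_lt_length_of_mem (hall v)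
      have h3 : l[l.idxOf v] = v := by simp
      have h2 : l.idxOf v ≠ 0 := by
        intro h0
        simp only [h0] at h3
        rw [hx0] at h3
        exact G.loopless.irrefl _ (h3 ▸ hv')
      have h4 : l.idxOf v - 1 + 1 = l.idxOf v := by omega
      simp only [S, Finset.coe_filter, Finset.mem_range, Set.mem_ofPred_eq]
      refine ⟨by omega, by omega, ?_⟩
      simp only [h4, h3]; exact hv'
    · intro v hv w hw hvw
      have key : ∀ v, G.Adj x v → l.idxOf v ≠ 0 := by
        intro v hv' h0
        have h1 : l.idxOf v < l.length := List.idxOf_lt_length_of_mem (hall v)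
        have h3 : l[l.idxOf v] = v := by simp
        simp only [h0] at h3
        rw [hx0] at h3
        exact G.loopless.irrefl _ (h3 ▸ hv')
      have a1 := key v (by simpa using hv)
      have a2 := key w (by simpa using hw)
      have : l.idxOf v = l.idxOf w := by simp only at hvw; omega
      exact (List.idxOf_inj (hall v)).1 this
  have hT : G.degree y ≤ T.card := by
    rw [← G.card_neighborFinset_eq_degree]
    apply Finset.card_le_card_of_injOn (fun v => l.idxOf v)
    · intro v hv
      have hv' : G.Adj y v := by simpa using hv
      have h1 : l.idxOf v < l.length := List.idxOf_lt_length_of_mem (hall v)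
      have h3 : l[l.idxOf v] = v := by simp
      have h2 : l.idxOf v ≠ l.length - 1 := by
        intro h0
        simp only [h0] at h3
        rw [hyl] at h3
        exact G.loopless.irrefl _ (h3 ▸ hv')
      simp only [T, Finset.coe_filter, Finset.mem_range, Set.mem_ofPred_eq]
      refine ⟨by omega, by omega, ?_⟩
      simp only [h3]; exact hv'
    · intro v hv w hw hvw
      exact (List.idxOf_inj (hall v)).1 hvw
  have hST : (S ∩ T).Nonempty := by
    by_contra hcon
    rw [Finset.not_nonempty_iff_eq_empty] at hcon
    have h1 := Finset.card_union_add_card_inter S T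
    rw [hcon, Finset.card_empty] at h1
    have h2 : (S ∪ T).card ≤ l.length - 1 := by
      have : S ∪ T ⊆ Finset.range (l.length - 1) :=
        Finset.union_subset (Finset.filter_subset _ _) (Finset.filter_subset _ _)
      simpa using Finset.card_le_card this
    omega
  obtain ⟨i, hi⟩ := hST
  simp only [S, T, Finset.mem_inter, Finset.mem_filter, Finset.mem_range] at hi
  obtain ⟨⟨-, h1, hax⟩, -, h2, hay⟩ := hi
  have hA : l.take (i+1) ≠ [] := by
    apply List.ne_nil_of_length_pos; simp; omega
  have hB : l.drop (i+1) ≠ [] := by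
    apply List.ne_nil_of_length_pos; simp; omega
  refine ⟨l.take (i+1), l.drop (i+1), hA, hB, (List.take_append_drop _ _).symm, ?_, ?_⟩
  · rw [List.getLast_drop, ← hy]
    have : (l.take (i+1)).getLast hA = l[i] := by
      rw [List.getLast_eq_getElem]
      simp only [List.getElem_take, List.length_take]
      congr 1; omega
    rw [this]; exact hay.symm
  · have e1 : (l.drop (i+1)).head hB = l[i+1] := by
      rw [List.head_eq_getElem]; simp
    have e2 : (l.take (i+1)).head hA = x := by
      rw [List.head_take]
    rw [e1, e2]; exact hax.symm

lemma improve (hore : ∀ x y, x ≠ y → ¬ G.Adj x y → Fintype.card V ≤ G.degree x + G.degree y)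
    (hc : 3 ≤ Fintype.card V)
    (l : List V) (hne : l ≠ []) (hnd : l.Nodup) (hall : ∀ v, v ∈ l)
    (hxy : ¬ G.Adj (l.getLast hne) (l.head hne)) :
    ∃ (l' : List V) (hne' : l' ≠ []), l'.Nodup ∧ (∀ v, v ∈ l') ∧
      cycGaps G l' hne' < cycGaps G l hne := by
  have hlen : l.length = Fintype.card V := by
    rw [← List.toFinset_card_of_nodup hnd, ← Finset.card_univ]
    congr 1; ext v; simp [hall]
  have hneq : l.getLast hne ≠ l.head hne := by
    rw [List.getLast_eq_getElem, List.head_eq_getElem]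
    intro h
    have := (List.Nodup.getElem_inj_iff hnd).1 h
    omega
  obtain ⟨A, B, hA, hB, rfl, h1, h2⟩ := exists_cross G l hne hnd hall (hore _ _ hneq hxy)
  have hp : (A ++ B.reverse).Perm (A ++ B) := (List.reverse_perm B).append_left A
  refine ⟨A ++ B.reverse, by simp [hA], hp.nodup_iff.2 hnd, fun v => hp.mem_iff.2 (hall v), ?_⟩
  rw [List.getLast_append_of_ne_nil _ hB, List.head_append_of_ne_nil hA] at hxy
  rw [cycGaps_append G A B hA hB, cycGaps_append G A B.reverse hA (by simpa using hB),
    pathGaps_reverse]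
  simp only [List.head_reverse, List.getLast_reverse]
  simp [gap, h1, h2, hxy]

theorem ore_theorem
    (hore : ∀ x y, x ≠ y → ¬ G.Adj x y → Fintype.card V ≤ G.degree x + G.degree y)
    (hc : 3 ≤ Fintype.card V) : G.IsHamiltonian := by
  have hex : ∃ k, ∃ (l : List V) (hne : l ≠ []), l.Nodup ∧ (∀ v, v ∈ l) ∧
      cycGaps G l hne = k := by
    refine ⟨_, Finset.univ.toList, ?_, Finset.nodup_toList _, by simp, rfl⟩
    apply List.ne_nil_of_length_pos
    rw [Finset.length_toList, Finset.card_univ]; omega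
  classical
  obtain ⟨l, hne, hnd, hall, hk⟩ := Nat.find_spec hex
  have hmin : ∀ (l' : List V) (hne' : l' ≠ []), l'.Nodup → (∀ v, v ∈ l') →
      cycGaps G l hne ≤ cycGaps G l' hne' := by
    intro l' hne' h1 h2
    rw [hk]
    exact Nat.find_min' hex ⟨l', hne', h1, h2, rfl⟩
  have hlen : l.length = Fintype.card V := by
    rw [← List.toFinset_card_of_nodup hnd, ← Finset.card_univ]
    congr 1; ext v; simp [hall]
  have hclose : G.Adj (l.getLast hne) (l.head hne) := by
    by_contra hxy
    obtain ⟨l', h1, h2, h3, h4⟩ := improve G hore hc l hne hnd hall hxy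
    exact absurd (hmin l' h1 h2 h3) (by omega)
  have hpath : pathGaps G l = 0 := by
    by_contra hpos
    obtain ⟨A, B, hA, hB, rfl, hgap⟩ := exists_gap_of_pos G l hpos
    have hp : (B ++ A).Perm (A ++ B) := List.perm_append_comm
    have hne' : B ++ A ≠ [] := by simp [hA]
    obtain ⟨l', h1, h2, h3, h4⟩ := improve G hore hc (B ++ A) hne' (hp.nodup_iff.2 hnd)
      (fun v => hp.mem_iff.2 (hall v))
      (by rwa [List.getLast_append_of_ne_nil _ hA, List.head_append_of_ne_nil hB])
    have h5 := hmin l' h1 h2 h3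
    rw [cycGaps_append G B A hB hA] at h4
    rw [cycGaps_append G A B hA hB] at h5
    omega
  intro _
  let p := SimpleGraph.Walk.ofSupport l hne (isChain_of_pathGaps G l hpath)
  have hsupp : p.support = l := SimpleGraph.Walk.support_ofSupport ..
  have hplen : p.length + 1 = Fintype.card V := by
    rw [← SimpleGraph.Walk.length_support, hsupp, hlen]
  refine ⟨_, SimpleGraph.Walk.cons hclose p, ?_⟩
  rw [SimpleGraph.Walk.isHamiltonianCycle_iff_isCycle_and_length_eq,
    SimpleGraph.Walk.isCycle_iff_isPath_tail_and_le_length]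
  refine ⟨⟨?_, ?_⟩, ?_⟩
  · simp [SimpleGraph.Walk.isPath_def, hsupp, hnd]
  · simp; omega
  · simpa using hplen

end Ore

lemma nonempty_iso_of_map {V : Type*} [DecidableEq V] (G : SimpleGraph V)
    (H : SimpleGraph (Fin 4)) (f : Fin 4 → V) (hf : Function.Injective f)
    (h : ∀ i j, G.Adj (f i) (f j) ↔ H.Adj i j) :
    Nonempty (G.induce ((Finset.univ.image f : Finset V) : Set V) ≃g H) := by
  let g : Fin 4 → ((Finset.univ.image f : Finset V) : Set V) := fun i => ⟨f i, by simp⟩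
  have hg : Function.Bijective g := by
    constructor
    · intro i j hij
      exact hf (congrArg Subtype.val hij)
    · rintro ⟨v, hv⟩
      have hv' : ∃ i, f i = v := by simpa using hv
      obtain ⟨i, rfl⟩ := hv'
      exact ⟨i, rfl⟩
  let e : H ≃g G.induce ((Finset.univ.image f : Finset V) : Set V) :=
    { toEquiv := Equiv.ofBijective g hg
      map_rel_iff' := by
        intro i j
        exact h i j }
  exact ⟨e.symm⟩

section Patterns
variable {V : Type*} [Fintype V] [DecidableEq V]
    (G : SimpleGraph V) [DecidableRel G.Adj]

lemma cond_map
    (hcond : ∀ S : Finset V, S.card = 4 →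
      (Nonempty (G.induce (S : Set V) ≃g pathUnionK1) ∨
       (Nonempty (G.induce (S : Set V) ≃g triangleUnionK1) ∨
        Nonempty (G.induce (S : Set V) ≃g star13) ∨
        Nonempty (G.induce (S : Set V) ≃g path4)) ∨
       Nonempty (G.induce (S : Set V) ≃g star13PlusE)) →
      ∀ x ∈ S, ∀ y ∈ S, x ≠ y → ¬ G.Adj x y →
        Fintype.card V ≤ G.degree x + G.degree y)
    (H : SimpleGraph (Fin 4))
    (hH : H = pathUnionK1 ∨ H = triangleUnionK1 ∨ H = star13 ∨ H = path4 ∨ H = star13PlusE)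
    (f : Fin 4 → V) (hf : Function.Injective f)
    (h : ∀ i j, G.Adj (f i) (f j) ↔ H.Adj i j) (i j : Fin 4) (hij : i ≠ j)
    (hn : ¬ G.Adj (f i) (f j)) :
    Fintype.card V ≤ G.degree (f i) + G.degree (f j) := by
  have hiso := nonempty_iso_of_map G H f hf h
  refine hcond (Finset.univ.image f) ?_ ?_ _ (by simp) _ (by simp) (hf.ne hij) hn
  · rw [Finset.card_image_of_injective _ hf]; rfl
  · rcases hH with rfl | rfl | rfl | rfl | rfl <;> tauto

lemma four_injective {V : Type*} {a b c d : V} (n01 : a ≠ b) (n02 : a ≠ c) (n03 : a ≠ d)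
    (n12 : b ≠ c) (n13 : b ≠ d) (n23 : c ≠ d) : Function.Injective ![a, b, c, d] := by
  intro i j hij
  fin_cases i <;> fin_cases j <;> simp_all

lemma cond_path_union_k1
    (hcond : ∀ S : Finset V, S.card = 4 →
      (Nonempty (G.induce (S : Set V) ≃g pathUnionK1) ∨
       (Nonempty (G.induce (S : Set V) ≃g triangleUnionK1) ∨
        Nonempty (G.induce (S : Set V) ≃g star13) ∨
        Nonempty (G.induce (S : Set V) ≃g path4)) ∨
       Nonempty (G.induce (S : Set V) ≃g star13PlusE)) →
      ∀ x ∈ S, ∀ y ∈ S, x ≠ y → ¬ G.Adj x y →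
        Fintype.card V ≤ G.degree x + G.degree y)
    (a b c d : V)
    (n01 : a ≠ b) (n02 : a ≠ c) (n03 : a ≠ d) (n12 : b ≠ c) (n13 : b ≠ d) (n23 : c ≠ d)
    (h01 : G.Adj a b) (h02 : ¬ G.Adj a c) (h03 : ¬ G.Adj a d) (h12 : G.Adj b c) (h13 : ¬ G.Adj b d) (h23 : ¬ G.Adj c d) :
    Fintype.card V ≤ G.degree a + G.degree c ∧
      Fintype.card V ≤ G.degree a + G.degree d ∧
      Fintype.card V ≤ G.degree b + G.degree d ∧
      Fintype.card V ≤ G.degree c + G.degree d := by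
  have key := cond_map G hcond pathUnionK1 (Or.inl rfl) ![a, b, c, d]
    (four_injective n01 n02 n03 n12 n13 n23)
    (by
      intro i j
      fin_cases i <;> fin_cases j <;>
        simp [pathUnionK1, h01, h02, h03, h12, h13, h23, G.adj_comm b a, G.adj_comm c a,
          G.adj_comm d a, G.adj_comm c b, G.adj_comm d b, G.adj_comm d c])
  exact ⟨key 0 2 (by decide) h02, key 0 3 (by decide) h03, key 1 3 (by decide) h13, key 2 3 (by decide) h23⟩

lemma cond_triangle_union_k1
    (hcond : ∀ S : Finset V, S.card = 4 →
      (Nonempty (G.induce (S : Set V) ≃g pathUnionK1) ∨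
       (Nonempty (G.induce (S : Set V) ≃g triangleUnionK1) ∨
        Nonempty (G.induce (S : Set V) ≃g star13) ∨
        Nonempty (G.induce (S : Set V) ≃g path4)) ∨
       Nonempty (G.induce (S : Set V) ≃g star13PlusE)) →
      ∀ x ∈ S, ∀ y ∈ S, x ≠ y → ¬ G.Adj x y →
        Fintype.card V ≤ G.degree x + G.degree y)
    (a b c d : V)
    (n01 : a ≠ b) (n02 : a ≠ c) (n03 : a ≠ d) (n12 : b ≠ c) (n13 : b ≠ d) (n23 : c ≠ d)
    (h01 : G.Adj a b) (h02 : G.Adj a c) (h03 : ¬ G.Adj a d) (h12 : G.Adj b c) (h13 : ¬ G.Adj b d) (h23 : ¬ G.Adj c d) :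
    Fintype.card V ≤ G.degree a + G.degree d ∧
      Fintype.card V ≤ G.degree b + G.degree d ∧
      Fintype.card V ≤ G.degree c + G.degree d := by
  have key := cond_map G hcond triangleUnionK1 (Or.inr (Or.inl rfl)) ![a, b, c, d]
    (four_injective n01 n02 n03 n12 n13 n23)
    (by
      intro i j
      fin_cases i <;> fin_cases j <;>
        simp [triangleUnionK1, h01, h02, h03, h12, h13, h23, G.adj_comm b a, G.adj_comm c a,
          G.adj_comm d a, G.adj_comm c b, G.adj_comm d b, G.adj_comm d c])
  exact ⟨key 0 3 (by decide) h03, key 1 3 (by decide) h13, key 2 3 (by decide) h23⟩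

lemma cond_star
    (hcond : ∀ S : Finset V, S.card = 4 →
      (Nonempty (G.induce (S : Set V) ≃g pathUnionK1) ∨
       (Nonempty (G.induce (S : Set V) ≃g triangleUnionK1) ∨
        Nonempty (G.induce (S : Set V) ≃g star13) ∨
        Nonempty (G.induce (S : Set V) ≃g path4)) ∨
       Nonempty (G.induce (S : Set V) ≃g star13PlusE)) →
      ∀ x ∈ S, ∀ y ∈ S, x ≠ y → ¬ G.Adj x y →
        Fintype.card V ≤ G.degree x + G.degree y)
    (a b c d : V)
    (n01 : a ≠ b) (n02 : a ≠ c) (n03 : a ≠ d) (n12 : b ≠ c) (n13 : b ≠ d) (n23 : c ≠ d)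
    (h01 : G.Adj a b) (h02 : G.Adj a c) (h03 : G.Adj a d) (h12 : ¬ G.Adj b c) (h13 : ¬ G.Adj b d) (h23 : ¬ G.Adj c d) :
    Fintype.card V ≤ G.degree b + G.degree c ∧
      Fintype.card V ≤ G.degree b + G.degree d ∧
      Fintype.card V ≤ G.degree c + G.degree d := by
  have key := cond_map G hcond star13 (Or.inr (Or.inr (Or.inl rfl))) ![a, b, c, d]
    (four_injective n01 n02 n03 n12 n13 n23)
    (by
      intro i j
      fin_cases i <;> fin_cases j <;>
        simp [star13, h01, h02, h03, h12, h13, h23, G.adj_comm b a, G.adj_comm c a,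
          G.adj_comm d a, G.adj_comm c b, G.adj_comm d b, G.adj_comm d c])
  exact ⟨key 1 2 (by decide) h12, key 1 3 (by decide) h13, key 2 3 (by decide) h23⟩

lemma cond_path4
    (hcond : ∀ S : Finset V, S.card = 4 →
      (Nonempty (G.induce (S : Set V) ≃g pathUnionK1) ∨
       (Nonempty (G.induce (S : Set V) ≃g triangleUnionK1) ∨
        Nonempty (G.induce (S : Set V) ≃g star13) ∨
        Nonempty (G.induce (S : Set V) ≃g path4)) ∨
       Nonempty (G.induce (S : Set V) ≃g star13PlusE)) →
      ∀ x ∈ S, ∀ y ∈ S, x ≠ y → ¬ G.Adj x y →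
        Fintype.card V ≤ G.degree x + G.degree y)
    (a b c d : V)
    (n01 : a ≠ b) (n02 : a ≠ c) (n03 : a ≠ d) (n12 : b ≠ c) (n13 : b ≠ d) (n23 : c ≠ d)
    (h01 : G.Adj a b) (h02 : ¬ G.Adj a c) (h03 : ¬ G.Adj a d) (h12 : G.Adj b c) (h13 : ¬ G.Adj b d) (h23 : G.Adj c d) :
    Fintype.card V ≤ G.degree a + G.degree c ∧
      Fintype.card V ≤ G.degree a + G.degree d ∧
      Fintype.card V ≤ G.degree b + G.degree d := by
  have key := cond_map G hcond path4 (Or.inr (Or.inr (Or.inr (Or.inl rfl)))) ![a, b, c, d]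
    (four_injective n01 n02 n03 n12 n13 n23)
    (by
      intro i j
      fin_cases i <;> fin_cases j <;>
        simp [path4, h01, h02, h03, h12, h13, h23, G.adj_comm b a, G.adj_comm c a,
          G.adj_comm d a, G.adj_comm c b, G.adj_comm d b, G.adj_comm d c])
  exact ⟨key 0 2 (by decide) h02, key 0 3 (by decide) h03, key 1 3 (by decide) h13⟩

lemma cond_paw
    (hcond : ∀ S : Finset V, S.card = 4 →
      (Nonempty (G.induce (S : Set V) ≃g pathUnionK1) ∨
       (Nonempty (G.induce (S : Set V) ≃g triangleUnionK1) ∨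
        Nonempty (G.induce (S : Set V) ≃g star13) ∨
        Nonempty (G.induce (S : Set V) ≃g path4)) ∨
       Nonempty (G.induce (S : Set V) ≃g star13PlusE)) →
      ∀ x ∈ S, ∀ y ∈ S, x ≠ y → ¬ G.Adj x y →
        Fintype.card V ≤ G.degree x + G.degree y)
    (a b c d : V)
    (n01 : a ≠ b) (n02 : a ≠ c) (n03 : a ≠ d) (n12 : b ≠ c) (n13 : b ≠ d) (n23 : c ≠ d)
    (h01 : G.Adj a b) (h02 : G.Adj a c) (h03 : G.Adj a d) (h12 : G.Adj b c) (h13 : ¬ G.Adj b d) (h23 : ¬ G.Adj c d) :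
    Fintype.card V ≤ G.degree b + G.degree d ∧
      Fintype.card V ≤ G.degree c + G.degree d := by
  have key := cond_map G hcond star13PlusE (Or.inr (Or.inr (Or.inr (Or.inr rfl)))) ![a, b, c, d]
    (four_injective n01 n02 n03 n12 n13 n23)
    (by
      intro i j
      fin_cases i <;> fin_cases j <;>
        simp [star13PlusE, h01, h02, h03, h12, h13, h23, G.adj_comm b a, G.adj_comm c a,
          G.adj_comm d a, G.adj_comm c b, G.adj_comm d b, G.adj_comm d c])
  exact ⟨key 1 3 (by decide) h13, key 2 3 (by decide) h23⟩

lemma ore_of_cond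
    (hcond : ∀ S : Finset V, S.card = 4 →
      (Nonempty (G.induce (S : Set V) ≃g pathUnionK1) ∨
       (Nonempty (G.induce (S : Set V) ≃g triangleUnionK1) ∨
        Nonempty (G.induce (S : Set V) ≃g star13) ∨
        Nonempty (G.induce (S : Set V) ≃g path4)) ∨
       Nonempty (G.induce (S : Set V) ≃g star13PlusE)) →
      ∀ x ∈ S, ∀ y ∈ S, x ≠ y → ¬ G.Adj x y →
        Fintype.card V ≤ G.degree x + G.degree y)
    (hn : 4 ≤ Fintype.card V) (v : V) (hv : 2 ≤ G.degree v)
    (x y : V) (hxy : x ≠ y) (hadj : ¬ G.Adj x y) :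
    Fintype.card V ≤ G.degree x + G.degree y := by
  have hPath := cond_path_union_k1 G hcond
  have hTri := cond_triangle_union_k1 G hcond
  have hStar := cond_star G hcond
  have hP4 := cond_path4 G hcond
  have hPaw := cond_paw G hcond
  clear hcond
  by_contra hP
  -- a common neighbour forces everything to be a common neighbour
  have step1 : ∀ x y a b, x ≠ y → ¬ G.Adj x y →
      ¬ Fintype.card V ≤ G.degree x + G.degree y →
      G.Adj x a → G.Adj y a → b ≠ x → b ≠ y → b ≠ a → G.Adj x b := by
    intro x y a b hxy hadj hP hxa hya hbx hby hba
    have nxa := hxa.ne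
    have nya := hya.ne
    have hax := hxa.symm
    have hay := hya.symm
    have hyx : ¬ G.Adj y x := fun h => hadj h.symm
    by_contra hxb
    have hbx' : ¬ G.Adj b x := fun h => hxb h.symm
    by_cases hyb : G.Adj y b <;> by_cases hab : G.Adj a b
    · have := hPaw a y b x hya.ne' hba.symm hxa.ne' hby.symm hxy.symm hbx
        hay hab hax hyb hyx hbx'
      omega
    · have := hP4 x a y b nxa hxy hbx.symm nya.symm hba.symm hby.symm hxa hadj hxb hay hab hyb
      omega
    · have := hStar a x y b nxa.symm nya.symm hba.symm hxy hbx.symm hby.symm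
        hax hay hab hadj hxb hyb
      omega
    · have := hPath x a y b nxa hxy hbx.symm nya.symm hba.symm hby.symm hxa hadj hxb hay hab hyb
      omega
  -- a private neighbour of `x` has no other neighbours, neither has `x`
  have step2 : ∀ x y a b, x ≠ y → ¬ G.Adj x y →
      ¬ Fintype.card V ≤ G.degree x + G.degree y →
      G.Adj x a → ¬ G.Adj y a → b ≠ x → b ≠ y → b ≠ a → ¬ G.Adj x b ∧ ¬ G.Adj a b := by
    intro x y a b hxy hadj hP hxa hya hbx hby hba
    have nxa := hxa.ne
    have nya : y ≠ a := by rintro rfl; exact hadj hxa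
    have hax := hxa.symm
    have hay : ¬ G.Adj a y := fun h => hya h.symm
    have hyx : ¬ G.Adj y x := fun h => hadj h.symm
    by_contra hcon
    have hor : G.Adj x b ∨ G.Adj a b := by tauto
    by_cases hyb : G.Adj y b <;> by_cases hab : G.Adj a b <;> by_cases hxb : G.Adj x b
    · have := hPaw b x a y hbx hba hby nxa hxy nya.symm hxb.symm hab.symm hyb.symm hxa hadj hay
      omega
    · have := hP4 x a b y nxa hbx.symm hxy hba.symm nya.symm hby hxa hxb hadj hab hay hyb.symm
      omega
    · have := hP4 a x b y nxa.symm hba.symm nya.symm hbx.symm hxy hby hax hab hay hxb hadj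
        hyb.symm
      omega
    · tauto
    · have := hTri x a b y nxa hbx.symm hxy hba.symm nya.symm hby hxa hxb hadj hab hay
        (fun h => hyb h.symm)
      omega
    · have := hPath x a b y nxa hbx.symm hxy hba.symm nya.symm hby hxa hxb hadj hab hay
        (fun h => hyb h.symm)
      omega
    · have := hPath a x b y nxa.symm hba.symm nya.symm hbx.symm hxy hby hax hab hay hxb hadj
        (fun h => hyb h.symm)
      omega
    · tauto
  have hP' : ¬ Fintype.card V ≤ G.degree y + G.degree x := by rwa [add_comm]
  have hadj' : ¬ G.Adj y x := fun h => hadj h.symm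
  by_cases hcommon : ∃ a, G.Adj x a ∧ G.Adj y a
  · obtain ⟨a, hxa, hya⟩ := hcommon
    have hdeg : ∀ x y, x ≠ y → ¬ G.Adj x y →
        ¬ Fintype.card V ≤ G.degree x + G.degree y →
        G.Adj x a → G.Adj y a → Fintype.card V ≤ G.degree x + 2 := by
      intro x y hxy hadj hP hxa hya
      have hsub : (Finset.univ : Finset V) ⊆ G.neighborFinset x ∪ {x, y} := by
        intro b _
        simp only [Finset.mem_union, SimpleGraph.mem_neighborFinset, Finset.mem_insert,
          Finset.mem_singleton]
        by_cases h1 : b = x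
        · exact Or.inr (Or.inl h1)
        by_cases h2 : b = y
        · exact Or.inr (Or.inr h2)
        by_cases h3 : b = a
        · exact Or.inl (h3 ▸ hxa)
        exact Or.inl (step1 x y a b hxy hadj hP hxa hya h1 h2 h3)
      calc Fintype.card V = (Finset.univ : Finset V).card := rfl
        _ ≤ _ := Finset.card_le_card hsub
        _ ≤ _ := Finset.card_union_le _ _
        _ ≤ _ := by
          rw [G.card_neighborFinset_eq_degree]
          exact Nat.add_le_add_left Finset.card_le_two _
    have h1 := hdeg x y hxy hadj hP hxa hya
    have h2 := hdeg y x hxy.symm hadj' hP' hya hxa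
    omega
  · have hno : ∀ a, G.Adj x a → ¬ G.Adj y a := fun a h1 h2 => hcommon ⟨a, h1, h2⟩
    have hno' : ∀ a, G.Adj y a → ¬ G.Adj x a := fun a h1 h2 => hcommon ⟨a, h2, h1⟩
    have hdeg1 : G.degree x ≤ 1 := by
      rw [← G.card_neighborFinset_eq_degree, Finset.card_le_one]
      intro p hp q hq
      rw [SimpleGraph.mem_neighborFinset] at hp hq
      by_contra hpq
      exact (step2 x y p q hxy hadj hP hp (hno p hp) hq.ne'
        (by rintro rfl; exact hadj hq) (Ne.symm hpq)).1 hq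
    have hdeg1' : G.degree y ≤ 1 := by
      rw [← G.card_neighborFinset_eq_degree, Finset.card_le_one]
      intro p hp q hq
      rw [SimpleGraph.mem_neighborFinset] at hp hq
      by_contra hpq
      exact (step2 y x p q hxy.symm hadj' hP' hp (hno' p hp) hq.ne'
        (by rintro rfl; exact hadj' hq) (Ne.symm hpq)).1 hq
    have hvx : v ≠ x := by rintro rfl; omega
    have hvy : v ≠ y := by rintro rfl; omega
    obtain ⟨p, hp, q, hq, hpq⟩ := Finset.one_lt_card.1
      (show 1 < (G.neighborFinset v).card by rw [G.card_neighborFinset_eq_degree]; omega)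
    rw [SimpleGraph.mem_neighborFinset] at hp hq
    have hfar : ∀ x y, x ≠ y → ¬ G.Adj x y →
        ¬ Fintype.card V ≤ G.degree x + G.degree y → (∀ a, G.Adj x a → ¬ G.Adj y a) →
        v ≠ x → v ≠ y → ¬ G.Adj x v := by
      intro x y hxy hadj hP hno hvx hvy hxv
      have aux : ∀ b, G.Adj v b → b = x := by
        intro b hb
        by_contra hbx
        exact (step2 x y v b hxy hadj hP hxv (hno v hxv) hbx
          (by rintro rfl; exact hno v hxv hb.symm) hb.ne').2 hb
      exact hpq ((aux p hp).trans (aux q hq).symm)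
    have hxv := hfar x y hxy hadj hP hno hvx hvy
    have hyv := hfar y x hxy.symm hadj' hP' hno' hvy hvx
    have hfar2 : ∀ p, G.Adj v p → ¬ G.Adj x p := fun p hp hxp =>
      (step2 x y p v hxy hadj hP hxp (hno p hxp) hvx hvy hp.ne).2 hp.symm
    have hxp := hfar2 p hp
    have hxq := hfar2 q hq
    have npx : p ≠ x := by rintro rfl; exact hxv hp.symm
    have nqx : q ≠ x := by rintro rfl; exact hxv hq.symm
    have hbig : Fintype.card V ≤ G.degree v + G.degree x := by
      by_cases hpq' : G.Adj p q
      · have := hTri v p q x hp.ne hq.ne hvx hpq npx nqx hp hq (fun h => hxv h.symm) hpq'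
          (fun h => hxp h.symm) (fun h => hxq h.symm)
        omega
      · have := hPath p v q x hp.ne' hpq npx hq.ne hvx nqx hp.symm hpq' (fun h => hxp h.symm)
          hq (fun h => hxv h.symm) (fun h => hxq h.symm)
        omega
    have hsmall : G.degree v + 3 ≤ Fintype.card V := by
      have hdisj : Disjoint (G.neighborFinset v) {v, x, y} := by
        rw [Finset.disjoint_left]
        intro b hb hb'
        rw [SimpleGraph.mem_neighborFinset] at hb
        simp only [Finset.mem_insert, Finset.mem_singleton] at hb'
        rcases hb' with rfl | rfl | rfl
        · exact hb.ne rfl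
        · exact hxv hb.symm
        · exact hyv hb.symm
      have h3 : ({v, x, y} : Finset V).card = 3 := Finset.card_eq_three.2
        ⟨v, x, y, hvx, hvy, hxy, rfl⟩
      rw [← G.card_neighborFinset_eq_degree, ← h3, ← Finset.card_union_of_disjoint hdisj]
      exact Finset.card_le_univ _
    omega

end Patterns

/-- **Corollary 1.** Let `G` be a graph on `n ≥ 4` vertices satisfying `d(x) + d(y) ≥ n`
for each pair of nonadjacent vertices `x, y` of every 4-element induced subgraph isomorphic
to `K_{1,2} ∪ K_1`, to a graph obtained from `K_{1,2} ∪ K_1` by adding one edge (i.e. to one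
of `K_3 ∪ K_1`, `K_{1,3}`, `P_4`), or to `K_{1,3} + e`. If `G` has a vertex `v` with
`d(v) ≥ 2`, then `G` is Hamiltonian. -/
theorem stmt2 {V : Type*} [Fintype V] [DecidableEq V]
    (G : SimpleGraph V) [DecidableRel G.Adj]
    (hn : 4 ≤ Fintype.card V)
    (hcond : ∀ S : Finset V, S.card = 4 →
      (Nonempty (G.induce (S : Set V) ≃g pathUnionK1) ∨
       (Nonempty (G.induce (S : Set V) ≃g triangleUnionK1) ∨
        Nonempty (G.induce (S : Set V) ≃g star13) ∨
        Nonempty (G.induce (S : Set V) ≃g path4)) ∨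
       Nonempty (G.induce (S : Set V) ≃g star13PlusE)) →
      ∀ x ∈ S, ∀ y ∈ S, x ≠ y → ¬ G.Adj x y →
        Fintype.card V ≤ G.degree x + G.degree y)
    (v : V) (hv : 2 ≤ G.degree v) :
    G.IsHamiltonian := by
  exact ore_theorem G (ore_of_cond G hcond hn v hv) (by omega)
end

section
/- Let k ≥ 2 be an integer and let G be a connected simple graph on n vertices. Suppose that for every 4-element vertex subset S such that the subgraph of G induced on S is isomorphic to K_{1,2} ∪ K_1, to a graph obtained from K_{1,2} ∪ K_1 by adding one edge (i.e., to one of K_3 ∪ K_1, K_{1,3}, P_4), or to K_{1,3}+e, and for every pair of vertices x, y ∈ S that are nonadjacent in G, one has d(x) + d(y) ≥ n − k + 1 (degrees taken in G). Then G has a spanning tree with at most k leaves. -/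
open SimpleGraph

section kEnded
universe u
variable {V : Type u}

def KLeaf (T : SimpleGraph V) (v : V) : Prop := ∃ a, ∀ b, T.Adj v b ↔ b = a

theorem kleaf_iff (T : SimpleGraph V) (v : V) : (T.neighborSet v).ncard = 1 ↔ KLeaf T v := by
  rw [Set.ncard_eq_one]
  simp only [KLeaf, Set.ext_iff, mem_neighborSet, Set.mem_singleton_iff]

theorem kreach_closed {T : SimpleGraph V} {a b : V} (h : T.Reachable a b) (C : V → Prop)
    (ha : C a) (hC : ∀ u v, C u → T.Adj u v → C v) : C b := by
  obtain ⟨p⟩ := h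
  induction p with
  | nil => exact ha
  | cons h p ih => exact ih (hC _ _ ha h)

theorem kreach_mono {T T' : SimpleGraph V} {a b : V} (h : T.Reachable a b)
    (hC : ∀ u v, T.Adj u v → T'.Reachable u v) : T'.Reachable a b :=
  kreach_closed h (fun v => T'.Reachable a v) (Reachable.refl a)
    (fun u v hu huv => hu.trans (hC u v huv))

/-- boundary lemma -/
theorem kboundary {T : SimpleGraph V} {a b : V} (h : T.Reachable a b) (C : V → Prop)
    (ha : C a) (hb : ¬ C b) : ∃ u v, C u ∧ ¬ C v ∧ T.Adj u v := by
  by_contra hcon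
  push Not at hcon
  exact hb (kreach_closed h C ha (fun u v hu huv => by
    by_contra hv
    exact hcon u v hu hv huv))

theorem kcloser {T : SimpleGraph V} {a x : V} (h : T.Reachable a x) (hne : a ≠ x) :
    ∃ b, T.Adj a b ∧ T.dist b x + 1 = T.dist a x := by
  obtain ⟨p, hp⟩ := h.exists_walk_length_eq_dist
  cases p with
  | nil => exact absurd rfl hne
  | @cons _ b _ hadj q =>
    refine ⟨b, hadj, ?_⟩
    have h1 := dist_le q
    have h2 : T.dist a x ≤ T.dist b x + 1 := by
      obtain ⟨r, hr⟩ := q.reachable.exists_walk_length_eq_dist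
      have := dist_le (Walk.cons hadj r)
      rw [Walk.length_cons] at this
      omega
    rw [Walk.length_cons] at hp
    omega

/-- going from w to x without using u -/
theorem kavoid {T T' : SimpleGraph V} {u x : V}
    (hT : ∀ a b, T.Adj a b → a ≠ u → b ≠ u → T'.Adj a b) :
    ∀ (m : ℕ) (w : V), T.Reachable w x → T.dist w x = m → m < T.dist u x → T'.Reachable w x := by
  intro m
  induction m with
  | zero =>
    intro w hr h0 _
    rw [hr.dist_eq_zero_iff] at h0
    subst h0; exact Reachable.refl _
  | succ m ih =>
    intro w hr h0 hlt
    have hne : w ≠ x := by rintro rfl; simp at h0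
    obtain ⟨b, hb, hd⟩ := kcloser hr hne
    have hbx : T.Reachable b x := hb.symm.reachable.trans hr
    refine Reachable.trans (Adj.reachable (hT w b hb ?_ ?_)) (ih b hbx (by omega) (by omega))
    · rintro rfl; omega
    · rintro rfl; omega

structure KTree (G : SimpleGraph V) (S : Finset V) (T : SimpleGraph V) : Prop where
  le : T ≤ G
  sup : ∀ a b, T.Adj a b → a ∈ S
  conn : ∀ a b, a ∈ S → b ∈ S → T.Reachable a b
  card : T.edgeSet.ncard + 1 = S.card

def KSwap (T : SimpleGraph V) (a b c d : V) : SimpleGraph V := (T \ edge a b) ⊔ edge c d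

theorem kswap_adj (T : SimpleGraph V) (a b c d u v : V) : (KSwap T a b c d).Adj u v ↔
    (T.Adj u v ∧ ¬ ((u = a ∧ v = b) ∨ (u = b ∧ v = a))) ∨
    (((u = c ∧ v = d) ∨ (u = d ∧ v = c)) ∧ u ≠ v) := by
  simp only [KSwap, sup_adj, sdiff_adj, edge_adj]
  have := T.ne_of_adj (a := u) (b := v)
  grind

theorem kswap_tree [Finite V] {G : SimpleGraph V} {S : Finset V} {T : SimpleGraph V} (h : KTree G S T)
    {a b c d : V} (hab : T.Adj a b) (hcd : ¬ T.Adj c d) (hG : G.Adj c d) (hc : c ∈ S) (hd : d ∈ S)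
    (hr : (KSwap T a b c d).Reachable a b) : KTree G S (KSwap T a b c d) := by
  refine ⟨?_, ?_, ?_, ?_⟩
  · intro u v huv
    rw [kswap_adj] at huv
    rcases huv with h1 | ⟨⟨rfl, rfl⟩ | ⟨rfl, rfl⟩, _⟩
    · exact h.le h1.1
    · exact hG
    · exact hG.symm
  · intro u v huv
    rw [kswap_adj] at huv
    rcases huv with h1 | ⟨⟨rfl, rfl⟩ | ⟨rfl, rfl⟩, _⟩
    · exact h.sup _ _ h1.1
    · exact hc
    · exact hd
  · intro u v hu hv
    refine kreach_mono (h.conn u v hu hv) ?_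
    intro p q hpq
    by_cases h1 : (p = a ∧ q = b) ∨ (p = b ∧ q = a)
    · rcases h1 with ⟨rfl, rfl⟩ | ⟨rfl, rfl⟩
      · exact hr
      · exact hr.symm
    · exact Adj.reachable ((kswap_adj _ _ _ _ _ _ _).2 (Or.inl ⟨hpq, h1⟩))
  · have hE : (KSwap T a b c d).edgeSet = insert s(c, d) (T.edgeSet \ {s(a, b)}) := by
      ext e
      induction e using Sym2.ind with
      | _ u v =>
        have := hG.ne
        rw [mem_edgeSet, kswap_adj]
        simp only [Set.mem_insert_iff, Set.mem_sdiff, Set.mem_singleton_iff, mem_edgeSet, Sym2.eq_iff]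
        grind
    rw [hE, Set.ncard_insert_of_notMem (by simp [hcd]) (Set.toFinite _),
      Set.ncard_sdiff_singleton_add_one (by simpa using hab) (Set.toFinite _)]
    exact h.card

def KExt (T : SimpleGraph V) (c d : V) : SimpleGraph V := T ⊔ edge c d

theorem kext_adj (T : SimpleGraph V) (c d u v : V) : (KExt T c d).Adj u v ↔
    T.Adj u v ∨ (((u = c ∧ v = d) ∨ (u = d ∧ v = c)) ∧ u ≠ v) := by
  simp only [KExt, sup_adj, edge_adj]

theorem kext_tree [Finite V] [DecidableEq V] {G : SimpleGraph V} {S : Finset V} {T : SimpleGraph V}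
    (h : KTree G S T)
    {c d : V} (hG : G.Adj c d) (hc : c ∈ S) (hd : d ∉ S) : KTree G (insert d S) (KExt T c d) := by
  have hcd : ¬ T.Adj c d := fun h1 => hd (h.sup _ _ h1.symm)
  have hr : (KExt T c d).Adj c d := by rw [kext_adj]; exact Or.inr ⟨Or.inl ⟨rfl, rfl⟩, hG.ne⟩
  have hm : T ≤ KExt T c d := le_sup_left
  refine ⟨?_, ?_, ?_, ?_⟩
  · intro u v huv
    rw [kext_adj] at huv
    rcases huv with h1 | ⟨⟨rfl, rfl⟩ | ⟨rfl, rfl⟩, _⟩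
    · exact h.le h1
    · exact hG
    · exact hG.symm
  · intro u v huv
    rw [kext_adj] at huv
    rcases huv with h1 | ⟨⟨rfl, rfl⟩ | ⟨rfl, rfl⟩, _⟩
    · exact Finset.mem_insert_of_mem (h.sup _ _ h1)
    · exact Finset.mem_insert_of_mem hc
    · exact Finset.mem_insert_self _ _
  · have key : ∀ u, u ∈ insert d S → (KExt T c d).Reachable c u := by
      intro u hu
      rcases Finset.mem_insert.1 hu with rfl | hu
      · exact hr.reachable
      · exact (h.conn c u hc hu).mono hm
    intro u v hu hv
    exact (key u hu).symm.trans (key v hv)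
  · have hE : (KExt T c d).edgeSet = insert s(c, d) T.edgeSet := by
      ext e
      induction e using Sym2.ind with
      | _ u v =>
        have := hG.ne
        rw [mem_edgeSet, kext_adj]
        simp only [Set.mem_insert_iff, mem_edgeSet, Sym2.eq_iff]
        grind
    rw [hE, Set.ncard_insert_of_notMem (by simp [hcd]) (Set.toFinite _),
      Finset.card_insert_of_notMem hd, h.card]

def KL (T : SimpleGraph V) : Set V := {v | KLeaf T v}

/-- extension at a vertex that has a neighbour -/
theorem kext_leaf {T : SimpleGraph V} {c d e : V} (hce : T.Adj c e) (hd : ∀ a, ¬ T.Adj d a) :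
    KL (KExt T c d) ⊆ insert d (KL T \ {c}) := by
  rintro v ⟨a, ha⟩
  simp only [kext_adj] at ha
  have hed : e ≠ d := by rintro rfl; exact hd _ hce.symm
  have hcd : c ≠ d := by rintro rfl; exact hd _ hce
  by_cases hvd : v = d
  · exact Or.inl hvd
  · have hvc : v ≠ c := by
      rintro rfl
      have h1 := (ha e).1 (Or.inl hce)
      have h2 := (ha d).1 (by grind)
      grind
    refine Or.inr ⟨⟨a, fun b => ?_⟩, hvc⟩
    have := ha b
    grind

section main
variable [Fintype V] [DecidableEq V] {G : SimpleGraph V} {k : ℕ} {S : Finset V}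

theorem kF0' (hmax : ∀ S' T', KTree G S' T' → (KL T').ncard ≤ k → S'.card ≤ S.card)
    {T : SimpleGraph V} (hT : KTree G S T) (hL : (KL T).ncard ≤ k) {x v : V} (hx : x ∈ KL T)
    (hxv : G.Adj x v) : v ∈ S := by
  by_contra hv
  obtain ⟨e, he⟩ := id hx
  have hxe := (he e).2 rfl
  have h1 := kext_tree hT hxv (hT.sup _ _ hxe) hv
  have h2 := hmax _ _ h1 (by
    refine (Set.ncard_le_ncard (kext_leaf hxe (fun a ha => hv (hT.sup _ _ ha))) (Set.toFinite _)).trans ?_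
    refine (Set.ncard_insert_le _ _).trans ?_
    rw [Set.ncard_sdiff_singleton_add_one hx (Set.toFinite _)]
    exact hL)
  rw [Finset.card_insert_of_notMem hv] at h2
  omega

theorem kF0 (hk : 2 ≤ k) (hconn : G.Connected)
    (hmax : ∀ S' T', KTree G S' T' → (KL T').ncard ≤ k → S'.card ≤ S.card)
    (hne : S.Nonempty) (hS : ∃ v, v ∉ S)
    {T : SimpleGraph V} (hT : KTree G S T) : k ≤ (KL T).ncard := by
  by_contra hlt
  push Not at hlt
  obtain ⟨s, hs⟩ := hne
  obtain ⟨v, hv⟩ := hS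
  obtain ⟨w, z, hw, hz, hwz⟩ := kboundary (hconn.preconnected s v) (fun a => a ∈ S) hs hv
  have h1 := kext_tree hT hwz hw hz
  have h2 := hmax _ _ h1 (by
    by_cases hwe : ∃ e, T.Adj w e
    · obtain ⟨e, he⟩ := hwe
      refine (Set.ncard_le_ncard (kext_leaf he (fun a ha => hz (hT.sup _ _ ha))) (Set.toFinite _)).trans ?_
      refine (Set.ncard_insert_le _ _).trans ?_
      have := Set.ncard_le_ncard (Set.sdiff_subset (s := KL T) (t := {w})) (Set.toFinite _)
      omega
    · push Not at hwe
      have hall : ∀ a b, ¬ T.Adj a b := by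
        intro a b hab
        have : a = w := kreach_closed (hT.conn w a hw (hT.sup _ _ hab)) (fun a => a = w) rfl
          (by rintro u v rfl h; exact absurd h (hwe _))
        subst this
        exact hwe _ hab
      refine le_trans (Set.ncard_le_ncard (t := {w, z}) ?_ (Set.toFinite _)) (le_trans (Set.ncard_pair hwz.ne).le hk)
      rintro u ⟨a, ha⟩
      have := (ha a).2 rfl
      rw [kext_adj] at this
      have := hall u a
      simp only [Set.mem_insert_iff, Set.mem_singleton_iff]
      grind)
  rw [Finset.card_insert_of_notMem hz] at h2
  omega

theorem kF1 (hk : 2 ≤ k) (hconn : G.Connected)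
    (hmax : ∀ S' T', KTree G S' T' → (KL T').ncard ≤ k → S'.card ≤ S.card)
    (hne : S.Nonempty) (hS : ∃ v, v ∉ S)
    {T : SimpleGraph V} (hT : KTree G S T) (hL : (KL T).ncard ≤ k) {x y : V} (hx : x ∈ KL T)
    (hy : y ∈ KL T) : ¬ G.Adj x y := by
  intro hxy
  obtain ⟨ex, hex⟩ := id hx
  obtain ⟨ey, hey⟩ := id hy
  have hxS : x ∈ S := hT.sup _ _ ((hex _).2 rfl)
  have hyS : y ∈ S := hT.sup _ _ ((hey _).2 rfl)
  set P : V → Prop := fun w => w ∈ S ∧ T.dist w x + T.dist w y = T.dist x y with hP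
  have hPx : P x := ⟨hxS, by simp⟩
  have hPy : P y := ⟨hyS, by simp [dist_comm]⟩
  have hcy : ∀ w, P w → w ≠ y → ∃ w', T.Adj w w' ∧ P w' ∧ T.dist w' y + 1 = T.dist w y ∧
      T.dist w' x = T.dist w x + 1 := by
    intro w hw hwy
    obtain ⟨b, hb, hd⟩ := kcloser (hT.conn w y hw.1 hyS) hwy
    have hbS := hT.sup _ _ hb.symm
    have h1 : T.dist b x ≤ T.dist w x + 1 := by
      obtain ⟨r, hr⟩ := (hT.conn w x hw.1 hxS).exists_walk_length_eq_dist
      have := dist_le (Walk.cons hb.symm r)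
      rw [Walk.length_cons] at this
      omega
    have h2 : T.dist x y ≤ T.dist b x + T.dist b y := by
      obtain ⟨r, hr⟩ := (hT.conn x b hxS hbS).exists_walk_length_eq_dist
      obtain ⟨r', hr'⟩ := (hT.conn b y hbS hyS).exists_walk_length_eq_dist
      have := dist_le (r.append r')
      rw [Walk.length_append] at this
      rw [dist_comm (u := b) (v := x)]
      omega
    have h3 := hw.2
    exact ⟨b, hb, ⟨hbS, by omega⟩, hd, by omega⟩
  have hcx : ∀ w, P w → w ≠ x → ∃ w', T.Adj w w' ∧ P w' ∧ T.dist w' x + 1 = T.dist w x := by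
    intro w hw hwy
    obtain ⟨b, hb, hd⟩ := kcloser (hT.conn w x hw.1 hxS) hwy
    have hbS := hT.sup _ _ hb.symm
    have h1 : T.dist b y ≤ T.dist w y + 1 := by
      obtain ⟨r, hr⟩ := (hT.conn w y hw.1 hyS).exists_walk_length_eq_dist
      have := dist_le (Walk.cons hb.symm r)
      rw [Walk.length_cons] at this
      omega
    have h2 : T.dist x y ≤ T.dist b x + T.dist b y := by
      obtain ⟨r, hr⟩ := (hT.conn x b hxS hbS).exists_walk_length_eq_dist
      obtain ⟨r', hr'⟩ := (hT.conn b y hbS hyS).exists_walk_length_eq_dist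
      have := dist_le (r.append r')
      rw [Walk.length_append] at this
      rw [dist_comm (u := b) (v := x)]
      omega
    have h3 := hw.2
    exact ⟨b, hb, ⟨hbS, by omega⟩, hd⟩
  have hTxy : ∀ w, P w → w ≠ x → w ≠ y → ¬ T.Adj x y := by
    intro w hw hwx hwy hadj
    have h1 := dist_eq_one_iff_adj.2 hadj
    have h2 := (hT.conn w x hw.1 hxS).pos_dist_of_ne hwx
    have h3 := (hT.conn w y hw.1 hyS).pos_dist_of_ne hwy
    have := hw.2
    omega
  -- the swapped tree
  have hsw : ∀ w, P w → w ≠ x → w ≠ y → ∃ w' w'', T.Adj w w' ∧ T.Adj w w'' ∧ P w' ∧ P w'' ∧ w' ≠ w'' ∧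
      w'' ≠ w ∧ w ≠ w' ∧
      KTree G S (KSwap T w w' x y) ∧
      KL (KSwap T w w' x y) ⊆ insert w (insert w' (KL T \ {x, y})) := by
    intro w hw hwx hwy
    obtain ⟨w', ha', hP', hd1, hd2⟩ := hcy w hw hwy
    obtain ⟨w'', ha'', hP'', hd3⟩ := hcx w hw hwx
    have hTn := hTxy w hw hwx hwy
    refine ⟨w', w'', ha', ha'', hP', hP'', ?_, ha''.ne', ha'.ne, ?_, ?_⟩
    · rintro rfl; omega
    · refine kswap_tree hT ha' hTn hxy hxS hyS ?_
      have r1 : (KSwap T w w' x y).Reachable w x := by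
        refine kavoid (T := T) (u := w') ?_ _ w (hT.conn w x hw.1 hxS) rfl (by omega)
        intro a b hab h1 h2
        rw [kswap_adj]; grind
      have r2 : (KSwap T w w' x y).Reachable w' y := by
        refine kavoid (T := T) (u := w) ?_ _ w' (hT.conn w' y hP'.1 hyS) rfl (by omega)
        intro a b hab h1 h2
        rw [kswap_adj]; grind
      have r3 : (KSwap T w w' x y).Adj x y := by
        rw [kswap_adj]; have := hxy.ne; grind
      exact r1.trans (r3.reachable.trans r2.symm)
    · rintro v ⟨a, ha⟩
      simp only [kswap_adj] at ha
      by_cases hvw : v = w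
      · exact Or.inl hvw
      by_cases hvw' : v = w'
      · exact Or.inr (Or.inl hvw')
      have hxyne := hxy.ne
      have hexy : ex ≠ y := fun h => hTn ((hex _).2 h.symm)
      have heyx : ey ≠ x := fun h => hTn (((hey _).2 h.symm).symm)
      have hvx : v ≠ x := by
        rintro rfl
        have h1 := (ha ex).1 (Or.inl ⟨(hex _).2 rfl, by grind⟩)
        have h2 := (ha y).1 (by grind)
        grind
      have hvy : v ≠ y := by
        rintro rfl
        have h1 := (ha ey).1 (Or.inl ⟨(hey _).2 rfl, by grind⟩)
        have h2 := (ha x).1 (by grind)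
        grind
      refine Or.inr (Or.inr ⟨⟨a, fun b => ?_⟩, by simp [hvx, hvy]⟩)
      have := ha b
      grind
  have hcard : (KL T \ {x, y}).ncard + 2 = (KL T).ncard := by
    have h1 := Set.ncard_sdiff_add_ncard_of_subset (s := {x, y}) (t := KL T)
      (by intro a ha; rcases ha with rfl | rfl <;> assumption) (Set.toFinite _)
    rw [Set.ncard_pair hxy.ne] at h1
    exact h1
  by_cases hB : ∃ w z, P w ∧ ¬ P z ∧ T.Adj w z
  · obtain ⟨w, z, hw, hz, hwz⟩ := hB
    have hwx : w ≠ x := by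
      rintro rfl
      obtain ⟨w', h1, h2, -⟩ := hcy w hw hxy.ne
      have := (hex _).1 h1
      have := (hex _).1 hwz
      grind
    have hwy : w ≠ y := by
      rintro rfl
      obtain ⟨w', h1, h2, -⟩ := hcx w hw hxy.ne'
      have := (hey _).1 h1
      have := (hey _).1 hwz
      grind
    obtain ⟨w', w'', h1, h2, hP', hP'', h3, h4, h5, h6, h7⟩ := hsw w hw hwx hwy
    have h8 := kF0 hk hconn hmax hne hS h6
    have h9 : KL (KSwap T w w' x y) ⊆ insert w' (KL T \ {x, y}) := by
      intro v hv
      rcases h7 hv with rfl | h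
      · exfalso
        obtain ⟨a, ha⟩ := hv
        simp only [kswap_adj] at ha
        have := (ha w'').1 (by grind)
        have := (ha z).1 (Or.inl ⟨hwz, by grind⟩)
        grind
      · exact h
    have h10 := Set.ncard_le_ncard h9 (Set.toFinite _)
    have h11 := Set.ncard_insert_le w' (KL T \ {x, y})
    omega
  · have hSP : ∀ a ∈ S, P a := by
      intro a ha
      refine kreach_closed (hT.conn x a hxS ha) P hPx ?_
      intro u v hu huv
      by_contra hv
      exact hB ⟨u, v, hu, hv, huv⟩
    obtain ⟨v, hv⟩ := hS
    obtain ⟨w, z, hw, hz, hwz⟩ := kboundary (hconn.preconnected x v) (fun a => a ∈ S) hxS hv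
    have hwx : w ≠ x := by
      rintro rfl
      exact hz (kF0' hmax hT hL hx hwz)
    have hwy : w ≠ y := by
      rintro rfl
      exact hz (kF0' hmax hT hL hy hwz)
    obtain ⟨w', w'', h1, h2, hP', hP'', h3, h4, h5, h6, h7⟩ := hsw w (hSP w hw) hwx hwy
    have h8 := kext_tree h6 hwz hw hz
    have h9 := kext_leaf (T := KSwap T w w' x y) (c := w) (d := z) (e := w'')
      (by rw [kswap_adj]; grind) (fun a ha => hz (h6.sup _ _ ha))
    have h10 : KL (KExt (KSwap T w w' x y) w z) ⊆ insert z (insert w' (KL T \ {x, y})) := by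
      intro v hv
      rcases h9 hv with h | ⟨h, h'⟩
      · exact Or.inl h
      · rcases h7 h with h | h
        · exact absurd h h'
        · exact Or.inr h
    have h11 := Set.ncard_le_ncard h10 (Set.toFinite _)
    have h12 := Set.ncard_insert_le z (insert w' (KL T \ {x, y}))
    have h13 := Set.ncard_insert_le w' (KL T \ {x, y})
    have h14 := hmax _ _ h8 (by omega)
    rw [Finset.card_insert_of_notMem hz] at h14
    omega

theorem kmain (hk : 2 ≤ k) (hconn : G.Connected) [DecidableRel G.Adj]
    (hdeg : ∀ x y, x ≠ y → ¬ G.Adj x y → Fintype.card V + 1 ≤ G.degree x + G.degree y + k)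
    (hmax : ∀ S' T', KTree G S' T' → (KL T').ncard ≤ k → S'.card ≤ S.card)
    (hne : S.Nonempty) (hS : ∃ v, v ∉ S)
    {T : SimpleGraph V} (hT : KTree G S T) (hL : (KL T).ncard ≤ k) : False := by
  have hk' := kF0 hk hconn hmax hne hS hT
  obtain ⟨x, y, hx, hy, hxy⟩ := (Set.one_lt_ncard_iff (s := KL T) (Set.toFinite _)).1 (by omega)
  have hnadj := kF1 hk hconn hmax hne hS hT hL hx hy
  obtain ⟨ex, hex⟩ := id hx
  obtain ⟨ey, hey⟩ := id hy
  have hxS : x ∈ S := hT.sup _ _ ((hex _).2 rfl)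
  have hyS : y ∈ S := hT.sup _ _ ((hey _).2 rfl)
  have hex1 : ∀ u, ∃ w, G.Adj x u → T.Adj u w ∧ T.dist w x + 1 = T.dist u x := by
    intro u
    by_cases hu : G.Adj x u
    · obtain ⟨w, hw⟩ := kcloser (hT.conn u x (kF0' hmax hT hL hx hu) hxS) hu.ne'
      exact ⟨w, fun _ => hw⟩
    · exact ⟨x, fun h => absurd h hu⟩
  choose f hf using hex1
  -- rotation
  have hrot : ∀ u, G.Adj x u → f u ≠ x → f u ∉ KL T ∧ ¬ G.Adj (f u) y ∧
      (∀ u', T.Adj (f u) u' → T.dist u' x = T.dist u x → u' = u) := by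
    intro u hu hfx
    obtain ⟨hadj, hd⟩ := hf u hu
    have huS := hT.sup _ _ hadj
    have hfS := hT.sup _ _ hadj.symm
    set w := f u with hw
    obtain ⟨w2, hw2, hd2⟩ := kcloser (hT.conn w x hfS hxS) hfx
    have huw2 : u ≠ w2 := by rintro rfl; omega
    have hxu : ¬ T.Adj u x := by
      intro h
      have h1 := dist_eq_one_iff_adj.2 h
      have h2 := (hT.conn w x hfS hxS).pos_dist_of_ne hfx
      omega
    have hwL : w ∉ KL T := by
      rintro ⟨a, ha⟩
      have := (ha u).1 hadj.symm
      have := (ha w2).1 hw2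
      grind
    have hux := hu.ne
    have htree : KTree G S (KSwap T u w u x) := by
      refine kswap_tree hT hadj hxu hu.symm huS hxS ?_
      have r1 : (KSwap T u w u x).Reachable w x := by
        refine kavoid (T := T) (u := u) ?_ _ w (hT.conn w x hfS hxS) rfl (by omega)
        intro a b hab h1 h2
        rw [kswap_adj]; grind
      have r3 : (KSwap T u w u x).Adj u x := by
        rw [kswap_adj]; grind
      exact r3.reachable.trans r1.symm
    have hsub : KL (KSwap T u w u x) ⊆ insert w (KL T \ {x}) := by
      rintro v ⟨a, ha⟩
      simp only [kswap_adj] at ha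
      by_cases hvw : v = w
      · exact Or.inl hvw
      have hvx : v ≠ x := by
        rintro rfl
        have h1 := (ha ex).1 (Or.inl ⟨(hex _).2 rfl, by grind⟩)
        have h2 := (ha u).1 (by grind)
        have := (hex u).2 (by grind)
        exact hxu this.symm
      refine Or.inr ⟨?_, hvx⟩
      by_cases hvu : v = u
      · subst hvu
        refine ⟨w, fun b => ?_⟩
        have h1 := (ha b)
        have h2 := (ha x).1 (by grind)
        grind
      · refine ⟨a, fun b => ?_⟩
        have := ha b
        grind
    have hc1 := kF0 hk hconn hmax hne hS htree
    have hc2 := Set.ncard_insert_le w (KL T \ {x})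
    rw [Set.ncard_sdiff_singleton_add_one hx (Set.toFinite _)] at hc2
    have heq : KL (KSwap T u w u x) = insert w (KL T \ {x}) :=
      Set.eq_of_subset_of_ncard_le hsub (by omega) (Set.toFinite _)
    have hwL' : w ∈ KL (KSwap T u w u x) := by rw [heq]; exact Or.inl rfl
    have hyL' : y ∈ KL (KSwap T u w u x) := by rw [heq]; exact Or.inr ⟨hy, fun h => hxy h.symm⟩
    refine ⟨hwL, kF1 hk hconn hmax hne hS htree (by rw [heq]; omega) hwL' hyL', ?_⟩
    intro u' hu' hdu'
    by_contra hne'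
    obtain ⟨a, ha⟩ := hwL'
    simp only [kswap_adj] at ha
    have hu'w2 : u' ≠ w2 := by rintro rfl; omega
    have h1 := (ha u').1 (Or.inl ⟨hu', by grind⟩)
    have h2 := (ha w2).1 (Or.inl ⟨hw2, by grind⟩)
    exact hu'w2 (h1.trans h2.symm)
  have hinj : Set.InjOn f (G.neighborFinset x : Set V) := by
    intro u1 h1 u2 h2 h12
    simp only [Finset.mem_coe, mem_neighborFinset] at h1 h2
    by_cases hfx : f u1 = x
    · have e1 := (hf u1 h1).1
      have e2 := (hf u2 h2).1
      rw [hfx] at e1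
      rw [← h12, hfx] at e2
      rw [(hex _).1 e1.symm, (hex _).1 e2.symm]
    · have e1 := (hf u1 h1).2
      have e2 := (hf u2 h2)
      rw [← h12] at e2
      exact ((hrot u1 h1 hfx).2.2 u2 e2.1.symm (by omega)).symm
  classical
  have hdisj : Disjoint ((G.neighborFinset x).image f) (G.neighborFinset y) := by
    rw [Finset.disjoint_left]
    intro a ha hay
    obtain ⟨u, hu, rfl⟩ := Finset.mem_image.1 ha
    rw [mem_neighborFinset] at hu hay
    by_cases hfx : f u = x
    · rw [hfx] at hay; exact hnadj hay.symm
    · exact (hrot u hu hfx).2.1 hay.symm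
  have hLS : (KL T \ {x}).toFinset ⊆ S := by
    intro a ha
    rw [Set.mem_toFinset] at ha
    obtain ⟨e, he⟩ := ha.1
    exact hT.sup _ _ ((he _).2 rfl)
  have hsub : (G.neighborFinset x).image f ∪ G.neighborFinset y ⊆ S \ (KL T \ {x}).toFinset := by
    intro a ha
    rw [Finset.mem_sdiff, Set.mem_toFinset]
    rcases Finset.mem_union.1 ha with ha | ha
    · obtain ⟨u, hu, rfl⟩ := Finset.mem_image.1 ha
      rw [mem_neighborFinset] at hu
      refine ⟨hT.sup _ _ (hf u hu).1.symm, fun h => ?_⟩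
      exact (hrot u hu h.2).1 h.1
    · rw [mem_neighborFinset] at ha
      exact ⟨kF0' hmax hT hL hy ha, fun h => kF1 hk hconn hmax hne hS hT hL hy h.1 ha⟩
  have hc := Finset.card_le_card hsub
  rw [Finset.card_union_of_disjoint hdisj, Finset.card_image_of_injOn hinj, card_neighborFinset_eq_degree,
    card_neighborFinset_eq_degree, Finset.card_sdiff_of_subset hLS, ← Set.ncard_eq_toFinset_card'] at hc
  have h1 := Set.ncard_sdiff_singleton_add_one hx (Set.toFinite _)
  have h2 : S.card < Fintype.card V := Finset.card_lt_univ_of_notMem hS.choose_spec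
  have h3 := hdeg x y hxy hnadj
  have h4 := Finset.card_le_card hLS
  rw [← Set.ncard_eq_toFinset_card'] at h4
  omega

theorem kBT (hk : 2 ≤ k) (hconn : G.Connected) [DecidableRel G.Adj]
    (hdeg : ∀ x y, x ≠ y → ¬ G.Adj x y → Fintype.card V + 1 ≤ G.degree x + G.degree y + k) :
    ∃ T : SimpleGraph V, T ≤ G ∧ T.IsTree ∧ (KL T).ncard ≤ k := by
  classical
  let F : Finset (Finset V) := Finset.univ.filter
    (fun S => S.Nonempty ∧ ∃ T, KTree G S T ∧ (KL T).ncard ≤ k)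
  have hF : F.Nonempty := by
    obtain ⟨v⟩ := hconn.nonempty
    refine ⟨{v}, ?_⟩
    simp only [F, Finset.mem_filter, Finset.mem_univ, true_and]
    refine ⟨⟨v, by simp⟩, ⊥, ⟨bot_le, by simp, ?_, by simp⟩, ?_⟩
    · intro a b ha hb
      rw [Finset.mem_singleton] at ha hb
      subst ha; subst hb; exact Reachable.refl _
    · have : KL (⊥ : SimpleGraph V) = ∅ := by
        ext v
        simp only [KL, KLeaf, bot_adj, false_iff, Set.mem_ofPred_eq, Set.mem_empty_iff_false, iff_false]
        rintro ⟨a, ha⟩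
        exact ha a rfl
      rw [this]; simp
  obtain ⟨S, hSF, hSmax⟩ := F.exists_max_image Finset.card hF
  simp only [F, Finset.mem_filter, Finset.mem_univ, true_and] at hSF hSmax
  obtain ⟨hne, T, hT, hL⟩ := hSF
  have hmax : ∀ S' T', KTree G S' T' → (KL T').ncard ≤ k → S'.card ≤ S.card := by
    intro S' T' h1 h2
    rcases S'.eq_empty_or_nonempty with rfl | h
    · simp
    · exact hSmax S' ⟨h, T', h1, h2⟩
  have hall : ∀ v, v ∈ S := by
    by_contra hcon
    push Not at hcon
    exact kmain hk hconn hdeg hmax hne hcon hT hL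
  refine ⟨T, hT.le, ?_, hL⟩
  rw [isTree_iff_connected_and_card]
  refine ⟨(connected_iff _).2 ⟨fun a b => hT.conn a b (hall a) (hall b), hconn.nonempty⟩, ?_⟩
  have : S = Finset.univ := Finset.eq_univ_of_forall hall
  have h := hT.card
  rw [this, Finset.card_univ, ← Nat.card_coe_set_eq, ← Nat.card_eq_fintype_card] at h
  exact h

end main

theorem kiso {G : SimpleGraph V} {H : SimpleGraph (Fin 4)} {S : Finset V} (f : Fin 4 → V)
    (hinj : Function.Injective f) (hS : ∀ v, v ∈ S ↔ ∃ i, f i = v)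
    (hadj : ∀ i j, G.Adj (f i) (f j) ↔ H.Adj i j) :
    Nonempty (G.induce (S : Set V) ≃g H) := by
  let g : Fin 4 → (S : Set V) := fun i => ⟨f i, (hS _).2 ⟨i, rfl⟩⟩
  have hg : Function.Bijective g := by
    constructor
    · intro i j hij
      exact hinj (congrArg Subtype.val hij)
    · rintro ⟨v, hv⟩
      obtain ⟨i, hi⟩ := (hS v).1 hv
      exact ⟨i, Subtype.ext hi⟩
  refine ⟨RelIso.symm ⟨Equiv.ofBijective g hg, ?_⟩⟩
  intro i j
  exact hadj i j

theorem kiso4 [DecidableEq V] {G : SimpleGraph V} {H : SimpleGraph (Fin 4)} {a b c d : V}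
    (h : a ≠ b ∧ a ≠ c ∧ a ≠ d ∧ b ≠ c ∧ b ≠ d ∧ c ≠ d)
    (h01 : G.Adj a b ↔ H.Adj 0 1) (h02 : G.Adj a c ↔ H.Adj 0 2) (h03 : G.Adj a d ↔ H.Adj 0 3)
    (h12 : G.Adj b c ↔ H.Adj 1 2) (h13 : G.Adj b d ↔ H.Adj 1 3) (h23 : G.Adj c d ↔ H.Adj 2 3) :
    Nonempty (G.induce (({a, b, c, d} : Finset V) : Set V) ≃g H) := by
  obtain ⟨n1, n2, n3, n4, n5, n6⟩ := h
  refine kiso ![a, b, c, d] ?_ ?_ ?_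
  · intro i j hij
    fin_cases i <;> fin_cases j <;> simp_all
  · intro v
    simp [Fin.exists_fin_succ, eq_comm]
  · intro i j
    fin_cases i <;> fin_cases j <;>
      simp [h01, h02, h03, h12, h13, h23, G.adj_comm b a, G.adj_comm c a, G.adj_comm d a,
        G.adj_comm c b, G.adj_comm d b, G.adj_comm d c, H.adj_comm 1 0, H.adj_comm 2 0,
        H.adj_comm 3 0, H.adj_comm 2 1, H.adj_comm 3 1, H.adj_comm 3 2]

theorem kcard4 [DecidableEq V] {a b c d : V}
    (h : a ≠ b ∧ a ≠ c ∧ a ≠ d ∧ b ≠ c ∧ b ≠ d ∧ c ≠ d) : ({a, b, c, d} : Finset V).card = 4 := by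
  obtain ⟨n1, n2, n3, n4, n5, n6⟩ := h
  simp [Finset.card_insert_of_notMem, *]

end kEnded

/-- **Corollary 2.** For a given integer `k ≥ 2`, every connected graph on `n` vertices
satisfying `d(x) + d(y) ≥ n - k + 1` for each pair of nonadjacent vertices `x, y` of every
4-element induced subgraph isomorphic to `K_{1,2} ∪ K_1`, to a graph obtained from
`K_{1,2} ∪ K_1` by adding one edge (i.e. to one of `K_3 ∪ K_1`, `K_{1,3}`, `P_4`), or to
`K_{1,3} + e`, has a spanning tree with at most `k` leaves. -/
theorem stmt3 {V : Type*} [Fintype V] [DecidableEq V]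
    (G : SimpleGraph V) [DecidableRel G.Adj]
    (k : ℕ) (hk : 2 ≤ k) (hconn : G.Connected)
    (hcond : ∀ S : Finset V, S.card = 4 →
      (Nonempty (G.induce (S : Set V) ≃g pathUnionK1) ∨
       (Nonempty (G.induce (S : Set V) ≃g triangleUnionK1) ∨
        Nonempty (G.induce (S : Set V) ≃g star13) ∨
        Nonempty (G.induce (S : Set V) ≃g path4)) ∨
       Nonempty (G.induce (S : Set V) ≃g star13PlusE)) →
      ∀ x ∈ S, ∀ y ∈ S, x ≠ y → ¬ G.Adj x y →
        (Fintype.card V : ℤ) - k + 1 ≤ G.degree x + G.degree y) :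
    ∃ T : SimpleGraph V, T ≤ G ∧ T.IsTree ∧
      {v : V | (T.neighborSet v).ncard = 1}.ncard ≤ k := by
  have hdeg : ∀ x y, x ≠ y → ¬ G.Adj x y →
      Fintype.card V + 1 ≤ G.degree x + G.degree y + k := by
    intro x y hxy hn
    by_cases hcom : ∃ a, G.Adj x a ∧ G.Adj a y
    · obtain ⟨a, hxa, hay⟩ := hcom
      by_cases hv : ∃ v, v ≠ x ∧ v ≠ y ∧ ¬ (G.Adj x v ∧ G.Adj y v)
      · obtain ⟨v, hvx, hvy, hv⟩ := hv
        have hva : v ≠ a := by rintro rfl; exact hv ⟨hxa, hay.symm⟩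
        have key : ∀ S : Finset V, S.card = 4 → x ∈ S → y ∈ S → _ →
            Fintype.card V + 1 ≤ G.degree x + G.degree y + k := fun S h1 h2 h3 h4 => by
          have := hcond S h1 h4 x h2 y h3 hxy hn
          omega
        have c1 := hxa.ne
        have c2 := hay.ne
        by_cases e1 : G.Adj x v
        · have e2 : ¬ G.Adj y v := fun h => hv ⟨e1, h⟩
          by_cases e3 : G.Adj a v
          · have hd : a ≠ x ∧ a ≠ v ∧ a ≠ y ∧ x ≠ v ∧ x ≠ y ∧ v ≠ y := by grind
            refine key {a, x, v, y} (kcard4 hd) (by simp) (by simp) (Or.inr (Or.inr ?_))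
            apply kiso4 hd <;> simp [star13PlusE, *, hxa.symm, G.adj_comm v y]
          · have hd : v ≠ x ∧ v ≠ a ∧ v ≠ y ∧ x ≠ a ∧ x ≠ y ∧ a ≠ y := by grind
            refine key {v, x, a, y} (kcard4 hd) (by simp) (by simp)
              (Or.inr (Or.inl (Or.inr (Or.inr ?_))))
            apply kiso4 hd <;> simp [path4, *, e1.symm, G.adj_comm v y, G.adj_comm v a]
        · by_cases e2 : G.Adj y v
          · by_cases e3 : G.Adj a v
            · have hd : a ≠ y ∧ a ≠ v ∧ a ≠ x ∧ y ≠ v ∧ y ≠ x ∧ v ≠ x := by grind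
              refine key {a, y, v, x} (kcard4 hd) (by simp) (by simp) (Or.inr (Or.inr ?_))
              apply kiso4 hd <;> simp [star13PlusE, *, hxa.symm, G.adj_comm v x, G.adj_comm y x]
            · have hd : v ≠ y ∧ v ≠ a ∧ v ≠ x ∧ y ≠ a ∧ y ≠ x ∧ a ≠ x := by grind
              refine key {v, y, a, x} (kcard4 hd) (by simp) (by simp)
                (Or.inr (Or.inl (Or.inr (Or.inr ?_))))
              apply kiso4 hd <;> simp [path4, *, e2.symm, G.adj_comm v x, G.adj_comm v a,
                G.adj_comm y x, hay.symm, hxa.symm]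
          · by_cases e3 : G.Adj a v
            · have hd : a ≠ x ∧ a ≠ y ∧ a ≠ v ∧ x ≠ y ∧ x ≠ v ∧ y ≠ v := by grind
              refine key {a, x, y, v} (kcard4 hd) (by simp) (by simp)
                (Or.inr (Or.inl (Or.inr (Or.inl ?_))))
              apply kiso4 hd <;> simp [star13, *, hxa.symm]
            · have hd : x ≠ a ∧ x ≠ y ∧ x ≠ v ∧ a ≠ y ∧ a ≠ v ∧ y ≠ v := by grind
              refine key {x, a, y, v} (kcard4 hd) (by simp) (by simp) (Or.inl ?_)
              apply kiso4 hd <;> simp [pathUnionK1, *]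
      · push Not at hv
        have hc2 : ({x, y} : Finset V).card = 2 := Finset.card_pair hxy
        have hc3 : ({x, y, a} : Finset V).card = 3 := Finset.card_eq_three.2
          ⟨x, y, a, hxy, hxa.ne, hay.ne', rfl⟩
        have h3 := Finset.card_le_univ ({x, y, a} : Finset V)
        have h1 : (Finset.univ \ {x, y} : Finset V) ⊆ G.neighborFinset x := by
          intro v h
          simp only [Finset.mem_sdiff, Finset.mem_univ, true_and, Finset.mem_insert,
            Finset.mem_singleton, not_or] at h
          rw [mem_neighborFinset]
          exact (hv v h.1 h.2).1
        have h2 : (Finset.univ \ {x, y} : Finset V) ⊆ G.neighborFinset y := by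
          intro v h
          simp only [Finset.mem_sdiff, Finset.mem_univ, true_and, Finset.mem_insert,
            Finset.mem_singleton, not_or] at h
          rw [mem_neighborFinset]
          exact (hv v h.1 h.2).2
        have h1' := Finset.card_le_card h1
        have h2' := Finset.card_le_card h2
        rw [Finset.card_sdiff_of_subset (Finset.subset_univ _), Finset.card_univ,
          card_neighborFinset_eq_degree] at h1' h2'
        omega
    · push Not at hcom
      obtain ⟨b, hb, hbd⟩ := kcloser (hconn.preconnected x y) hxy
      have hby : b ≠ y := by rintro rfl; exact hn hb
      obtain ⟨c, hc, hcd⟩ := kcloser (hconn.preconnected b y) hby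
      have hbn := hcom b hb
      have hcy : c ≠ y := by rintro rfl; exact hbn hc
      have hcx : c ≠ x := by rintro rfl; omega
      have hxc : ¬ G.Adj x c := by
        intro h
        obtain ⟨r, hr⟩ := (hconn.preconnected c y).exists_walk_length_eq_dist
        have := dist_le (Walk.cons h r)
        rw [Walk.length_cons] at this
        omega
      have c1 := hb.ne
      have c2 := hc.ne
      have hd : x ≠ b ∧ x ≠ c ∧ x ≠ y ∧ b ≠ c ∧ b ≠ y ∧ c ≠ y := by grind
      have := hcond {x, b, c, y} (kcard4 hd) (by
        by_cases e : G.Adj c y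
        · refine Or.inr (Or.inl (Or.inr (Or.inr ?_)))
          apply kiso4 hd <;> simp [path4, *]
        · refine Or.inl ?_
          apply kiso4 hd <;> simp [pathUnionK1, *]) x (by simp) y (by simp) hxy hn
      omega
  obtain ⟨T, h1, h2, h3⟩ := kBT hk hconn hdeg
  refine ⟨T, h1, h2, ?_⟩
  simp only [kleaf_iff]
  exact h3
end

section
/- Let k ≥ 2 be an integer and let G be a connected simple graph on n vertices such that d(u) + d(v) ≥ n − k + 1 for every pair of nonadjacent vertices u and v. Then G has a spanning tree with at most k leaves. -/
open SimpleGraph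

namespace KEnded

variable {V : Type*}

/-- Remove the edge `pw` and add the edge `ux`. -/
def exch (T : SimpleGraph V) (u x p w : V) : SimpleGraph V :=
  T.deleteEdges {s(p, w)} ⊔ edge u x

lemma exch_adj {T : SimpleGraph V} {u x p w : V} (hux : u ≠ x) (a b : V) :
    (exch T u x p w).Adj a b ↔
      (T.Adj a b ∧ ¬ (a = p ∧ b = w) ∧ ¬ (a = w ∧ b = p)) ∨ (a = u ∧ b = x) ∨ (a = x ∧ b = u) := by
  unfold exch
  simp only [sup_adj, deleteEdges_adj, edge_adj, Set.mem_singleton_iff, Sym2.eq_iff]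
  grind

/-- The set of leaves. -/
def leaves (T : SimpleGraph V) : Set V := {v : V | (T.neighborSet v).ncard = 1}

lemma mem_leaves {T : SimpleGraph V} {v : V} : v ∈ leaves T ↔ (T.neighborSet v).ncard = 1 := Iff.rfl

lemma exch_isTree [Finite V] {T : SimpleGraph V} (hT : T.IsTree) {u x : V} (q : T.Walk u x)
    (hq : q.IsPath) (i : ℕ) (hi : i < q.length) (hux : u ≠ x) (hnadj : ¬ T.Adj u x) :
    (exch T u x (q.getVert i) (q.getVert (i+1))).IsTree := by
  have hpw : T.Adj (q.getVert i) (q.getVert (i+1)) := q.adj_getVert_succ hi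
  have hinj := hq.getVert_injOn
  have hinj' : ∀ a b, a ≤ q.length → b ≤ q.length → q.getVert a = q.getVert b → a = b :=
    fun a b ha hb h => hinj ha hb h
  set T' := exch T u x (q.getVert i) (q.getVert (i+1)) with hT'
  rw [isTree_iff_connected_and_card] at hT ⊢
  obtain ⟨hc, hcard⟩ := hT
  have hstep : ∀ j, j < q.length → j ≠ i → T'.Adj (q.getVert j) (q.getVert (j+1)) := by
    intro j hj hji
    rw [hT', exch_adj hux]
    left
    refine ⟨q.adj_getVert_succ hj, ?_, ?_⟩
    · rintro ⟨h1, -⟩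
      exact hji (hinj' _ _ (by omega) (by omega) h1)
    · rintro ⟨h1, h2⟩
      have := hinj' _ _ (by omega) (by omega) h1
      have := hinj' _ _ (by omega) (by omega) h2
      omega
  have h1 : ∀ j, j ≤ i → T'.Reachable u (q.getVert j) := by
    intro j
    induction j with
    | zero => intro _; simp
    | succ j ih =>
      intro hj
      exact (ih (by omega)).trans (hstep j (by omega) (by omega)).reachable
  have h2 : ∀ j, i + 1 + j ≤ q.length → T'.Reachable (q.getVert (i+1)) (q.getVert (i+1+j)) := by
    intro j
    induction j with
    | zero => intro _; simp
    | succ j ih =>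
      intro hj
      exact (ih (by omega)).trans (hstep (i+1+j) (by omega) (by omega)).reachable
  have h3 : T'.Reachable (q.getVert (i+1)) x := by
    have := h2 (q.length - (i+1)) (by omega)
    rwa [show i + 1 + (q.length - (i+1)) = q.length by omega, q.getVert_length] at this
  have h4 : T'.Adj u x := by rw [hT', exch_adj hux]; simp
  have h5 : T'.Reachable (q.getVert i) (q.getVert (i+1)) :=
    ((h1 i le_rfl).symm.trans h4.reachable).trans h3.symm
  have h6 : ∀ a b, T.Adj a b → T'.Reachable a b := by
    intro a b hab
    by_cases hA : a = q.getVert i ∧ b = q.getVert (i+1)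
    · rw [hA.1, hA.2]; exact h5
    by_cases hB : a = q.getVert (i+1) ∧ b = q.getVert i
    · rw [hB.1, hB.2]; exact h5.symm
    exact Adj.reachable ((exch_adj hux a b).2 (Or.inl ⟨hab, hA, hB⟩))
  have h7 : ∀ a b, T.Walk a b → T'.Reachable a b := by
    intro a b W
    induction W with
    | nil => exact Reachable.refl _
    | cons h _ ih => exact (h6 _ _ h).trans ih
  refine ⟨?_, ?_⟩
  · haveI := hc.nonempty
    exact ⟨fun a b => (hc.preconnected a b).elim (h7 a b)⟩
  · rw [← hcard]
    congr 1
    have he : T'.edgeSet = insert s(u, x) (T.edgeSet \ {s(q.getVert i, q.getVert (i+1))}) := by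
      rw [hT', exch, edgeSet_sup, edgeSet_deleteEdges, edgeSet_edge_of_ne hux, Set.union_singleton]
    rw [Nat.card_coe_set_eq, Nat.card_coe_set_eq, he]
    exact Set.ncard_exchange (by simpa using hnadj) (by simpa using hpw)

section nbr
variable {T : SimpleGraph V} {u x p w : V}

lemma nbr_u (hux : u ≠ x) (hup : u ≠ p) (huw : u ≠ w) :
    (exch T u x p w).neighborSet u = insert x (T.neighborSet u) := by
  ext b; simp only [mem_neighborSet, exch_adj hux, Set.mem_insert_iff]; grind

lemma nbr_p (hux : u ≠ x) (hup : u ≠ p) (hpx : p ≠ x) (hpw : p ≠ w) :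
    (exch T u x p w).neighborSet p = T.neighborSet p \ {w} := by
  ext b
  simp only [mem_neighborSet, exch_adj hux, Set.mem_diff, Set.mem_singleton_iff]; grind

lemma nbr_w (hux : u ≠ x) (hpx : p ≠ x) :
    (exch T u x p x).neighborSet x = insert u (T.neighborSet x \ {p}) := by
  ext b
  simp only [mem_neighborSet, exch_adj hux, Set.mem_diff, Set.mem_insert_iff,
    Set.mem_singleton_iff]; grind

lemma nbr_x (hux : u ≠ x) (hpx : p ≠ x) (hxw : x ≠ w) :
    (exch T u x p w).neighborSet x = insert u (T.neighborSet x) := by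
  ext b; simp only [mem_neighborSet, exch_adj hux, Set.mem_insert_iff]; grind

lemma nbr_other (hux : u ≠ x) {a : V} (h1 : a ≠ u) (h2 : a ≠ x) (h3 : a ≠ p) (h4 : a ≠ w) :
    (exch T u x p w).neighborSet a = T.neighborSet a := by
  ext b; simp only [mem_neighborSet, exch_adj hux]; grind

end nbr

lemma exch_le {T G : SimpleGraph V} {u x p w : V} (hTG : T ≤ G) (h : G.Adj u x) :
    exch T u x p w ≤ G := by
  intro a b hab
  rw [exch_adj h.ne] at hab
  rcases hab with h1 | ⟨rfl, rfl⟩ | ⟨rfl, rfl⟩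
  · exact hTG h1.1
  · exact h
  · exact h.symm

/-- A spanning tree with as few leaves as possible. -/
def IsMin (G T : SimpleGraph V) : Prop :=
  T ≤ G ∧ T.IsTree ∧ ∀ S : SimpleGraph V, S ≤ G → S.IsTree → (leaves T).ncard ≤ (leaves S).ncard

lemma not_adj_of_long {T : SimpleGraph V} (hT : T.IsTree) {u x : V} (q : T.Walk u x)
    (hq : q.IsPath) (hl : 2 ≤ q.length) : ¬ T.Adj u x := by
  intro h
  have := (hT.isAcyclic.subsingleton_path u x).elim ⟨q, hq⟩ (Path.singleton h)
  have h2 := congrArg (fun z : T.Path u x => z.1.length) this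
  simp [Path.singleton] at h2
  omega

variable [Finite V]

lemma two_le {T : SimpleGraph V} {a b c : V} (hb : T.Adj a b) (hc : T.Adj a c) (hbc : b ≠ c) :
    2 ≤ (T.neighborSet a).ncard :=
  (Set.one_lt_ncard (Set.toFinite _)).2 ⟨b, hb, c, hc, hbc⟩

/-- If all interior vertices of a path between two leaves have degree at most two,
there are at most two leaves. -/
lemma exists_branch {T : SimpleGraph V} (hT : T.IsTree) {u v : V} (q : T.Walk u v)
    (hq : q.IsPath) (hu : u ∈ leaves T) (hv : v ∈ leaves T) (huv : u ≠ v)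
    (hl : 3 ≤ (leaves T).ncard) :
    ∃ i, 0 < i ∧ i < q.length ∧ 3 ≤ (T.neighborSet (q.getVert i)).ncard := by
  by_contra! hcon
  have hinj' : ∀ a b, a ≤ q.length → b ≤ q.length → q.getVert a = q.getVert b → a = b :=
    fun a b ha hb h => hq.getVert_injOn ha hb h
  have hpos : 0 < q.length := by
    by_contra h0
    exact huv (Walk.eq_of_length_eq_zero (p := q) (by omega))
  have hclosed : ∀ i b, i ≤ q.length → T.Adj (q.getVert i) b → ∃ j, j ≤ q.length ∧ q.getVert j = b := by
    intro i b hi hb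
    by_contra! hne
    have hA : i < q.length → T.Adj (q.getVert i) (q.getVert (i+1)) := fun h => q.adj_getVert_succ h
    rcases Nat.eq_zero_or_pos i with rfl | hi0
    · have := two_le hb (hA hpos) (fun h => hne _ (by omega) h.symm)
      rw [q.getVert_zero] at this
      rw [mem_leaves] at hu
      omega
    have hB : T.Adj (q.getVert i) (q.getVert (i-1)) := by
      have := q.adj_getVert_succ (i := i-1) (by omega)
      rw [show i - 1 + 1 = i by omega] at this
      exact this.symm
    rcases hi.eq_or_lt with rfl | hi1
    · have := two_le hb hB (fun h => hne _ (by omega) h.symm)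
      rw [q.getVert_length] at this
      rw [mem_leaves] at hv
      omega
    · have := hcon i hi0 hi1
      have h3 : 2 < (T.neighborSet (q.getVert i)).ncard := by
        rw [Set.two_lt_ncard (Set.toFinite _)]
        refine ⟨b, hb, _, hB, _, hA hi1, fun h => hne _ (by omega) h.symm,
          fun h => hne _ (by omega) h.symm, fun h => ?_⟩
        have := hinj' _ _ (by omega) (by omega) h
        omega
      omega
  have hall : ∀ a b, T.Walk a b → (∃ j, j ≤ q.length ∧ q.getVert j = a) →
      ∃ j, j ≤ q.length ∧ q.getVert j = b := by
    intro a b W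
    induction W with
    | nil => exact id
    | cons h _ ih =>
      rintro ⟨j, hj, rfl⟩
      exact ih (hclosed _ _ hj h)
  have hsub : leaves T ⊆ {u, v} := by
    intro a ha
    obtain ⟨j, hj, rfl⟩ := (hT.connected.preconnected u a).elim
      (fun W => hall u a W ⟨0, by omega, q.getVert_zero⟩)
    rcases Nat.eq_zero_or_pos j with rfl | hj0
    · simp
    rcases hj.eq_or_lt with rfl | hj1
    · simp
    exfalso
    have hB := q.adj_getVert_succ (i := j-1) (by omega)
    rw [show j - 1 + 1 = j by omega] at hB
    have := two_le hB.symm (q.adj_getVert_succ hj1) (fun h => by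
      have := hinj' _ _ (by omega) (by omega) h
      omega)
    rw [mem_leaves] at ha
    omega
  have h1 := Set.ncard_le_ncard hsub (Set.toFinite _)
  have h2 := Set.ncard_pair huv
  omega

lemma indep {G T : SimpleGraph V} (hm : IsMin G T) (hl : 3 ≤ (leaves T).ncard) {u v : V}
    (hu : u ∈ leaves T) (hv : v ∈ leaves T) : ¬ G.Adj u v := by
  intro hadj
  obtain ⟨hTG, hT, hmin⟩ := hm
  have huv := hadj.ne
  obtain ⟨q, hq⟩ := hT.connected.exists_isPath u v
  obtain ⟨i, hi0, hi1, hdeg⟩ := exists_branch hT q hq hu hv huv hl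
  have hinj' : ∀ a b, a ≤ q.length → b ≤ q.length → q.getVert a = q.getVert b → a = b :=
    fun a b ha hb h => hq.getVert_injOn ha hb h
  have hn := not_adj_of_long hT q hq (by omega)
  have hS := exch_isTree hT q hq i hi1 huv hn
  have hle := hmin _ (exch_le hTG hadj) hS
  have hup : u ≠ q.getVert i := fun h => by
    have := hinj' 0 i (by omega) (by omega) (by simpa using h)
    omega
  have huw : u ≠ q.getVert (i+1) := fun h => by
    have := hinj' 0 (i+1) (by omega) (by omega) (by simpa using h)
    omega
  have hpx : q.getVert i ≠ v := fun h => by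
    have := hinj' i q.length (by omega) (by omega) (by simpa using h)
    omega
  have hpw := q.adj_getVert_succ hi1
  generalize q.getVert i = p at *
  generalize q.getVert (i+1) = w at *
  have hsub : leaves (exch T u v p w) ⊆ insert w (leaves T \ {u, v}) := by
    intro a ha
    by_cases haw : a = w
    · simp [haw]
    right
    rw [mem_leaves] at ha hu hv
    have hau : a ≠ u := by
      rintro rfl
      rw [nbr_u huv hup huw, Set.ncard_insert_of_notMem (by simpa using hn)] at ha
      omega
    have hav : a ≠ v := by
      rintro rfl
      rw [nbr_x huv hpx haw, Set.ncard_insert_of_notMem (by simpa [adj_comm] using hn)] at ha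
      omega
    have hap : a ≠ p := by
      rintro rfl
      rw [nbr_p huv hup hpx hpw.ne, Set.ncard_diff_singleton_of_mem (by simpa using hpw)] at ha
      omega
    rw [nbr_other huv hau hav hap haw] at ha
    exact ⟨ha, by simp [hau, hav]⟩
  have h1 := Set.ncard_le_ncard hsub (Set.toFinite _)
  have h2 := Set.ncard_insert_le w (leaves T \ {u, v})
  have h3 : (leaves T \ {u, v}).ncard = (leaves T).ncard - 2 := by
    rw [Set.ncard_diff (by intro a; rintro (rfl | rfl) <;> assumption), Set.ncard_pair huv]
  omega

lemma rotate {G T : SimpleGraph V} (hm : IsMin G T) {u x : V}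
    (hu : u ∈ leaves T) (hadj : G.Adj u x) (q : T.Walk u x) (hq : q.IsPath) (i : ℕ) (hi0 : 0 < i)
    (hi1 : i + 1 = q.length) :
    (T.neighborSet (q.getVert i)).ncard = 2 ∧ ∃ S, IsMin G S ∧
      (leaves S).ncard = (leaves T).ncard ∧ leaves S = insert (q.getVert i) (leaves T \ {u}) := by
  obtain ⟨hTG, hT, hmin⟩ := hm
  have hux := hadj.ne
  have hinj' : ∀ a b, a ≤ q.length → b ≤ q.length → q.getVert a = q.getVert b → a = b :=
    fun a b ha hb h => hq.getVert_injOn ha hb h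
  have hn := not_adj_of_long hT q hq (by omega)
  have hS := exch_isTree hT q hq i (by omega) hux hn
  have hup : u ≠ q.getVert i := fun h => by
    have := hinj' 0 i (by omega) (by omega) (by simpa using h)
    omega
  have hpx : q.getVert i ≠ x := fun h => by
    have := hinj' i q.length (by omega) (by omega) (by simpa using h)
    omega
  have hpw := q.adj_getVert_succ (i := i) (by omega)
  rw [hi1, q.getVert_length] at hpw hS
  generalize q.getVert i = p at *
  have hle := hmin _ (exch_le hTG hadj) hS
  have hNp := nbr_p (T := T) hux hup hpx hpx
  have hNpc : ((exch T u x p x).neighborSet p).ncard = (T.neighborSet p).ncard - 1 := by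
    rw [hNp, Set.ncard_diff_singleton_of_mem (by simpa using hpw)]
  have hu' : u ∉ leaves (exch T u x p x) := by
    rw [mem_leaves] at hu ⊢
    rw [nbr_u hux hup hux, Set.ncard_insert_of_notMem (by simpa using hn)]
    omega
  have hx' : x ∈ leaves (exch T u x p x) ↔ x ∈ leaves T := by
    rw [mem_leaves, mem_leaves, nbr_w hux hpx,
      Set.ncard_exchange (by simpa [adj_comm] using hn) (by simpa [adj_comm] using hpw)]
  have hoth : ∀ a, a ≠ u → a ≠ p → (a ∈ leaves (exch T u x p x) ↔ a ∈ leaves T) := by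
    intro a h1 h2
    by_cases h3 : a = x
    · rw [h3]; exact hx'
    · rw [mem_leaves, mem_leaves, nbr_other hux h1 h3 h2 h3]
  have hdiff : (leaves T \ {u}).ncard + 1 = (leaves T).ncard :=
    Set.ncard_diff_singleton_add_one hu
  have hp' : p ∈ leaves (exch T u x p x) := by
    by_contra hp
    have hsub : leaves (exch T u x p x) ⊆ leaves T \ {u} := by
      intro a ha
      have h1 : a ≠ u := fun h => hu' (h ▸ ha)
      have h2 : a ≠ p := fun h => hp (h ▸ ha)
      exact ⟨(hoth a h1 h2).1 ha, h1⟩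
    have := Set.ncard_le_ncard hsub (Set.toFinite _)
    omega
  have hdeg : (T.neighborSet p).ncard = 2 := by
    rw [mem_leaves] at hp'
    omega
  have hpL : p ∉ leaves T := by
    rw [mem_leaves]; omega
  have hset : leaves (exch T u x p x) = insert p (leaves T \ {u}) := by
    ext a
    by_cases h2 : a = p
    · simp [h2, hp']
    by_cases h1 : a = u
    · simp [h1, hu', hup]
    simp [hoth a h1 h2, h1, h2]
  have hcard : (leaves (exch T u x p x)).ncard = (leaves T).ncard := by
    rw [hset]; exact Set.ncard_exchange hpL hu
  exact ⟨hdeg, _, ⟨exch_le hTG hadj, hS, fun S h1 h2 => hcard ▸ hmin S h1 h2⟩, hcard, hset⟩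

lemma degree_sum {G T : SimpleGraph V} (hm : IsMin G T) (hl : 3 ≤ (leaves T).ncard) {u v : V}
    (hu : u ∈ leaves T) (hv : v ∈ leaves T) (huv : u ≠ v) :
    (G.neighborSet u).ncard + (G.neighborSet v).ncard + (leaves T).ncard ≤ Nat.card V + 1 := by
  have hT := hm.2.1
  have hpath := fun x => hT.connected.exists_isPath u x
  choose q hq using hpath
  set par : V → V := fun x => (q x).getVert ((q x).length - 1) with hpar
  have hpos : ∀ x, G.Adj u x → 0 < (q x).length := by
    intro x hx
    by_contra h0
    exact hx.ne (Walk.eq_of_length_eq_zero (p := q x) (by omega))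
  have hadjp : ∀ x, G.Adj u x → T.Adj (par x) x := by
    intro x hx
    have := (q x).adj_getVert_succ (i := (q x).length - 1) (by have := hpos x hx; omega)
    rwa [Nat.sub_add_cancel (hpos x hx), (q x).getVert_length] at this
  -- parents are `u`, or degree two vertices not adjacent to `v`
  have hkey : ∀ x, G.Adj u x → par x = u ∨
      ((T.neighborSet (par x)).ncard = 2 ∧ ¬ G.Adj v (par x)) := by
    intro x hx
    by_cases h1 : (q x).length = 1
    · left; simp [hpar, h1]
    right
    have := hpos x hx
    obtain ⟨hd, S, hS, hc, hset⟩ := rotate hm hu hx (q x) (hq x) ((q x).length - 1) (by omega)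
      (by omega)
    refine ⟨hd, indep hS (by omega) ?_ ?_⟩
    · rw [hset]; right; exact ⟨hv, huv.symm⟩
    · rw [hset]; left; rfl
  have hinj : Set.InjOn par (G.neighborSet u) := by
    intro x hx y hy hxy
    by_contra hne
    have hx1 := hadjp x hx
    have hy1 := hadjp y hy
    rw [← hxy] at hy1
    rcases hkey x hx with h | ⟨h, -⟩
    · have := two_le hx1 hy1 hne
      rw [h] at this
      rw [mem_leaves] at hu
      omega
    have hpu : par x ≠ u := by
      intro h'
      rw [h'] at h
      rw [mem_leaves] at hu
      omega
    -- the predecessor of the parent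
    obtain ⟨r, hr⟩ := hT.connected.exists_isPath u (par x)
    have hrpos : 0 < r.length := by
      by_contra h0
      exact hpu (Walk.eq_of_length_eq_zero (p := r) (by omega)).symm
    have hnot : ∀ z, G.Adj u z → par z = par x → z ∉ r.support := by
      intro z hz hzx hmem
      have hdrop : ((q z).take ((q z).length - 1)).IsPath := (hq z).take _
      have e := (hT.isAcyclic.subsingleton_path u (par x)).elim ⟨r, hr⟩
        ⟨((q z).take ((q z).length - 1)).copy rfl hzx, by simpa using hdrop⟩
      have e2 := congrArg (fun t : T.Path u (par x) => t.1.support) e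
      simp only [Walk.support_copy] at e2
      rw [e2, Walk.mem_support_iff_exists_getVert] at hmem
      obtain ⟨n, hn, hn2⟩ := hmem
      have hp := hpos z hz
      rw [Walk.take_length] at hn2
      rw [Walk.take_getVert] at hn
      have := (hq z).getVert_injOn (x₁ := min ((q z).length - 1) n) (x₂ := (q z).length)
        (show _ ≤ (q z).length by omega) (show _ ≤ (q z).length from le_rfl)
        (by rw [(q z).getVert_length]; exact hn)
      omega
    have hB := r.adj_getVert_succ (i := r.length - 1) (by omega)
    rw [Nat.sub_add_cancel hrpos, r.getVert_length] at hB
    have hmemB := r.getVert_mem_support (r.length - 1)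
    have h3 : 2 < (T.neighborSet (par x)).ncard := by
      rw [Set.two_lt_ncard (Set.toFinite _)]
      exact ⟨x, hx1, y, hy1, _, hB.symm, hne, fun e => hnot x hx rfl (by
          rw [← e] at hmemB; exact hmemB),
        fun e => hnot y hy hxy.symm (by rw [← e] at hmemB; exact hmemB)⟩
    omega
  have hcardA : (par '' G.neighborSet u).ncard = (G.neighborSet u).ncard :=
    Set.ncard_image_of_injOn hinj
  have hvu := indep hm hl hv hu
  have hdisj : Disjoint (par '' G.neighborSet u) (G.neighborSet v) := by
    rw [Set.disjoint_left]
    rintro _ ⟨x, hx, rfl⟩ hvx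
    rcases hkey x hx with h | ⟨-, h⟩
    · rw [h] at hvx; exact hvu hvx
    · exact h hvx
  have hdisj2 : Disjoint (par '' G.neighborSet u ∪ G.neighborSet v) (leaves T \ {u}) := by
    rw [Set.disjoint_left]
    rintro a (⟨x, hx, rfl⟩ | h1) ⟨h2, h3⟩
    · rcases hkey x hx with h | ⟨h, -⟩
      · exact h3 h
      · rw [mem_leaves] at h2; omega
    · exact indep hm hl hv h2 h1
  have e1 := Set.ncard_union_eq hdisj (Set.toFinite _) (Set.toFinite _)
  have e2 := Set.ncard_union_eq hdisj2 (Set.toFinite _) (Set.toFinite _)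
  have e3 : (leaves T \ {u}).ncard + 1 = (leaves T).ncard :=
    Set.ncard_diff_singleton_add_one hu
  have e4 := Set.ncard_le_card ((par '' G.neighborSet u ∪ G.neighborSet v) ∪ (leaves T \ {u}))
  omega

end KEnded

/-- **Theorem C.** For a given integer `k ≥ 2`, every connected graph on `n` vertices
satisfying `d(u) + d(v) ≥ n - k + 1` for each pair of nonadjacent vertices `u, v` has a
spanning tree with at most `k` leaves. -/
theorem stmt4 {V : Type*} [Fintype V] [DecidableEq V]
    (G : SimpleGraph V) [DecidableRel G.Adj]
    (k : ℕ) (hk : 2 ≤ k) (hconn : G.Connected)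
    (hcond : ∀ u v : V, u ≠ v → ¬ G.Adj u v →
      (Fintype.card V : ℤ) - k + 1 ≤ G.degree u + G.degree v) :
    ∃ T : SimpleGraph V, T ≤ G ∧ T.IsTree ∧
      {v : V | (T.neighborSet v).ncard = 1}.ncard ≤ k := by
  obtain ⟨T, hT⟩ := exists_minimalFor_of_wellFoundedLT
    (fun T : SimpleGraph V => T ≤ G ∧ T.IsTree) (fun T => (KEnded.leaves T).ncard)
    hconn.exists_isTree_le
  have hm : KEnded.IsMin G T := by
    refine ⟨hT.1.1, hT.1.2, fun S h1 h2 => ?_⟩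
    by_contra hlt
    exact hlt (hT.2 ⟨h1, h2⟩ (by simp only; omega))
  refine ⟨T, hm.1, hm.2.1, ?_⟩
  change (KEnded.leaves T).ncard ≤ k
  by_contra! hlt
  obtain ⟨u, hu, v, hv, huv⟩ := (Set.one_lt_ncard (Set.toFinite (KEnded.leaves T))).1 (by omega)
  have h1 := KEnded.degree_sum hm (by omega) hu hv huv
  have h2 := hcond u v huv (KEnded.indep hm (by omega) hu hv)
  have hd : ∀ a, (G.neighborSet a).ncard = G.degree a := by
    intro a
    rw [← Nat.card_coe_set_eq, Nat.card_eq_fintype_card, card_neighborSet_eq_degree]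
  rw [hd, hd, Nat.card_eq_fintype_card] at h1
  omega
end
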